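/- arXiv:2509.20994 — 2 statements merged into one kernel-verified Lean document; each statement's English description precedes it below -/
import Mathlib

section
/- Every finite simple graph G with m edges admits a 3-partition (V_1, V_2, V_3) such that (i) max_{1≤i≤3} e(V_i) ≤ m/9 + (1/9)·h(m), and (ii) e(V_1, V_2, V_3) ≥ (2/3)·m + (1/3)·h(m). -/
open Finset

noncomputable def hfun (x : ℝ) : ℝ := Real.sqrt (2 * x + 1 / 4) - 1 / 2

variable {V : Type*} [Fintype V] [DecidableEq V]

/-- Number of edges of `G` with both endpoints in `S`. -/
def eIn (G : SimpleGraph V) [DecidableRel G.Adj] (S : Finset V) : ℕ :=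
  (Finset.univ.filter (fun p : V × V => G.Adj p.1 p.2 ∧ p.1 ∈ S ∧ p.2 ∈ S)).card / 2

/-- Number of edges of `G` with one endpoint in `S` and the other in `T` (for disjoint `S`, `T`). -/
def eCross (G : SimpleGraph V) [DecidableRel G.Adj] (S T : Finset V) : ℕ :=
  (Finset.univ.filter (fun p : V × V => G.Adj p.1 p.2 ∧ p.1 ∈ S ∧ p.2 ∈ T)).card

/-- `P` is a partition of the vertex set into `k` pairwise disjoint (possibly empty) parts. -/
def IsKPartition {k : ℕ} (P : Fin k → Finset V) : Prop :=
  (∀ i j : Fin k, i ≠ j → Disjoint (P i) (P j)) ∧ ∀ v : V, ∃ i, v ∈ P i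

/-- The number of crossing edges of a `k`-partition. -/
def crossTotal (G : SimpleGraph V) [DecidableRel G.Adj] {k : ℕ} (P : Fin k → Finset V) : ℕ :=
  ∑ i : Fin k, ∑ j : Fin k, if i < j then eCross G (P i) (P j) else 0

/-- `f_k(G)`: the maximum number of crossing edges over all `k`-partitions of `G`. -/
noncomputable def maxCut (G : SimpleGraph V) [DecidableRel G.Adj] (k : ℕ) : ℕ :=
  sSup {n : ℕ | ∃ P : Fin k → Finset V, IsKPartition P ∧ crossTotal G P = n}


set_option linter.unusedSectionVars false

noncomputable section JP

open Classical in
def dg (G : SimpleGraph V) (S : Finset V) (v : V) : ℕ := ∑ u ∈ S, if G.Adj v u then 1 else 0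

def EE (G : SimpleGraph V) (S T : Finset V) : ℝ := ∑ v ∈ S, (dg G T v : ℝ)

lemma EE_symm (G : SimpleGraph V) (S T : Finset V) : EE G S T = EE G T S := by
  classical
  unfold EE dg
  push_cast
  rw [Finset.sum_comm]
  simp only [G.adj_comm]

lemma dg_union (G : SimpleGraph V) (S T : Finset V) (h : Disjoint S T) (v : V) :
    dg G (S ∪ T) v = dg G S v + dg G T v := by
  unfold dg; rw [Finset.sum_union h]

lemma dg_mono (G : SimpleGraph V) {S T : Finset V} (h : S ⊆ T) (v : V) :
    dg G S v ≤ dg G T v := by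
  unfold dg; exact Finset.sum_le_sum_of_subset h

lemma dg_le_card (G : SimpleGraph V) (S : Finset V) (v : V) : dg G S v ≤ S.card := by
  classical
  unfold dg
  calc _ ≤ ∑ u ∈ S, 1 := Finset.sum_le_sum (fun i _ => by split_ifs <;> simp)
    _ = _ := by simp

lemma dg_insert_self (G : SimpleGraph V) (S : Finset V) (v : V) :
    dg G (insert v S) v = dg G S v := by
  classical
  unfold dg
  by_cases h : v ∈ S
  · rw [Finset.insert_eq_of_mem h]
  · rw [Finset.sum_insert h]; simp

lemma dg_erase_self (G : SimpleGraph V) (S : Finset V) (v : V) :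
    dg G (S.erase v) v = dg G S v := by
  by_cases h : v ∈ S
  · conv_rhs => rw [← Finset.insert_erase h]
    rw [dg_insert_self]
  · rw [Finset.erase_eq_of_notMem h]

lemma EE_union_left (G : SimpleGraph V) (S T U : Finset V) (h : Disjoint S T) :
    EE G (S ∪ T) U = EE G S U + EE G T U := by
  unfold EE; rw [Finset.sum_union h]

lemma EE_union_right (G : SimpleGraph V) (S T U : Finset V) (h : Disjoint S T) :
    EE G U (S ∪ T) = EE G U S + EE G U T := by
  rw [EE_symm, EE_union_left G S T U h, EE_symm G S, EE_symm G T]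

lemma EE_nonneg (G : SimpleGraph V) (S T : Finset V) : 0 ≤ EE G S T := by
  unfold EE; positivity

lemma EE_singleton (G : SimpleGraph V) (S : Finset V) (v : V) : EE G {v} S = dg G S v := by
  simp [EE]

lemma dg_singleton (G : SimpleGraph V) (v : V) : dg G {v} v = 0 := by
  simp [dg]

lemma EE_insert (G : SimpleGraph V) (S : Finset V) (v : V) (h : v ∉ S) :
    EE G (insert v S) (insert v S) = EE G S S + 2 * dg G S v := by
  have hd : Disjoint {v} S := by simpa using h
  have e : insert v S = {v} ∪ S := rfl
  rw [e, EE_union_left _ _ _ _ hd, EE_union_right _ _ _ _ hd, EE_union_right _ _ _ _ hd,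
    EE_symm G S {v}, EE_singleton, EE_singleton, dg_singleton]
  push_cast; ring

lemma EE_erase (G : SimpleGraph V) (S : Finset V) (v : V) (h : v ∈ S) :
    EE G S S = EE G (S.erase v) (S.erase v) + 2 * dg G S v := by
  conv_lhs => rw [← Finset.insert_erase h]
  rw [EE_insert _ _ _ (Finset.notMem_erase v S), dg_erase_self]

lemma EE_mono_right (G : SimpleGraph V) (S : Finset V) {T U : Finset V} (h : T ⊆ U) :
    EE G S T ≤ EE G S U := by
  unfold EE
  exact Finset.sum_le_sum (fun v _ => by exact_mod_cast dg_mono G h v)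

lemma EE_self_le (G : SimpleGraph V) (S : Finset V) :
    EE G S S ≤ S.card * ((S.card : ℝ) - 1) := by
  unfold EE
  rw [← nsmul_eq_mul]
  refine Finset.sum_le_card_nsmul _ _ _ (fun v hv => ?_)
  rw [← dg_erase_self]
  have h1 := dg_le_card G (S.erase v) v
  have h2 := Finset.card_erase_add_one hv
  have : dg G (S.erase v) v + 1 ≤ S.card := by omega
  have : (dg G (S.erase v) v : ℝ) + 1 ≤ S.card := by exact_mod_cast this
  linarith

lemma exW (G : SimpleGraph V) (S : Finset V) (x : ℝ) (hx : 0 ≤ x)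
    (hS : x * (x + 1) < EE G S S) : ∃ W ⊆ S, EE G W W ≤ x * (x + 1) ∧
      x * (x + 1) < EE G W W + 2 * EE G W (S \ W) ∧
      x * (x + 1) - EE G W W ≤ x + EE G W (S \ W) ∧
      (∀ y ∈ W, 1 ≤ dg G S y) ∧ 1 ≤ EE G W (S \ W) ∧ x < W.card := by
  classical
  obtain ⟨U, hU, hmin⟩ := Finset.exists_min_image
    (S.powerset.filter (fun U => x * (x + 1) < EE G U U)) Finset.card
    ⟨S, by simpa using hS⟩
  simp only [Finset.mem_filter, Finset.mem_powerset] at hU hmin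
  obtain ⟨hUS, hUE⟩ := hU
  have hUne : U.Nonempty := by
    rw [Finset.nonempty_iff_ne_empty]
    rintro rfl
    simp [EE] at hUE
    nlinarith
  obtain ⟨v, hv, hvmin⟩ := Finset.exists_min_image U (dg G U) hUne
  have hWU : U.erase v ⊆ U := Finset.erase_subset _ _
  have hc := Finset.card_erase_add_one hv
  have hWE : EE G (U.erase v) (U.erase v) ≤ x * (x + 1) := by
    by_contra hcon
    have := hmin (U.erase v) ⟨hWU.trans hUS, not_le.mp hcon⟩
    omega
  have hE := EE_erase G U v hv
  have hd : (dg G U v : ℝ) ≤ EE G (U.erase v) (S \ U.erase v) := by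
    rw [← dg_erase_self, ← EE_singleton, EE_symm]
    apply EE_mono_right
    intro y hy
    simp at hy
    subst hy
    simp [hUS hv]
  have hpos : (0:ℝ) < dg G U v := by linarith
  have hpos' : 1 ≤ dg G U v := by
    have : 0 < dg G U v := by exact_mod_cast hpos
    omega
  have hpos1 : (1:ℝ) ≤ dg G U v := by exact_mod_cast hpos'
  have hle : dg G U v ≤ (U.erase v).card := by
    rw [← dg_erase_self]; exact dg_le_card _ _ _
  have hle' : (dg G U v : ℝ) ≤ (U.erase v).card := by exact_mod_cast hle
  have hcR : ((U.erase v).card : ℝ) + 1 = U.card := by exact_mod_cast hc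
  have hlow : (U.card : ℝ) * dg G U v ≤ EE G U U := by
    unfold EE
    rw [← nsmul_eq_mul]
    refine Finset.card_nsmul_le_sum _ _ _ (fun y hy => ?_)
    exact_mod_cast hvmin y hy
  have hup := EE_self_le G U
  refine ⟨U.erase v, hWU.trans hUS, hWE, by linarith, ?_, ?_, by linarith, ?_⟩
  · have hp : (dg G U v : ℝ) * (dg G U v + 1) ≤ EE G U U := by nlinarith
    have : x * x + dg G U v ≤ EE G U U := by
      rcases le_total (dg G U v : ℝ) x with h | h
      · nlinarith
      · nlinarith
    nlinarith
  · intro y hy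
    exact (hpos'.trans (hvmin y (hWU hy))).trans (dg_mono G hUS y)
  · by_contra hcon
    push Not at hcon
    have h0 : (0:ℝ) ≤ (U.erase v).card := by positivity
    rw [← hcR] at hup
    nlinarith

def pt {k : ℕ} (c : V → Fin k) (i : Fin k) : Finset V := Finset.univ.filter (fun v => c v = i)

def ins (G : SimpleGraph V) {k : ℕ} (c : V → Fin k) : ℝ := ∑ i, EE G (pt c i) (pt c i)

def ins2 (G : SimpleGraph V) {k : ℕ} (c : V → Fin k) : ℝ := ∑ i, (EE G (pt c i) (pt c i)) ^ 2

lemma pt_update_new {k : ℕ} (c : V → Fin k) (v : V) (j : Fin k) :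
    pt (Function.update c v j) j = insert v (pt c j) := by
  ext y; by_cases h : y = v <;> simp [pt, Function.update_apply, h]

lemma pt_update_old {k : ℕ} (c : V → Fin k) (v : V) (i j : Fin k) (hij : i ≠ j) :
    pt (Function.update c v j) i = (pt c i).erase v := by
  ext y; by_cases h : y = v <;> simp [pt, Function.update_apply, h, hij.symm]

lemma pt_update_other {k : ℕ} (c : V → Fin k) (v : V) (i j : Fin k) (hij : i ≠ j) (h : c v ≠ i) :
    pt (Function.update c v j) i = pt c i := by
  rw [pt_update_old _ _ _ _ hij, Finset.erase_eq_of_notMem]; simp [pt, h]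

lemma EE_update_new (G : SimpleGraph V) {k : ℕ} (c : V → Fin k) (v : V) (j : Fin k)
    (hij : c v ≠ j) :
    EE G (pt (Function.update c v j) j) (pt (Function.update c v j) j) =
      EE G (pt c j) (pt c j) + 2 * dg G (pt c j) v := by
  rw [pt_update_new, EE_insert]; simp [pt, hij]

lemma EE_update_old (G : SimpleGraph V) {k : ℕ} (c : V → Fin k) (v : V) (j : Fin k)
    (hij : c v ≠ j) :
    EE G (pt (Function.update c v j) (c v)) (pt (Function.update c v j) (c v)) =
      EE G (pt c (c v)) (pt c (c v)) - 2 * dg G (pt c (c v)) v := by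
  rw [pt_update_old _ _ _ _ hij, EE_erase G (pt c (c v)) v (by simp [pt])]; ring

lemma sum_update (G : SimpleGraph V) {k : ℕ} (c : V → Fin k) (v : V) (j : Fin k)
    (hij : c v ≠ j) (f : ℝ → ℝ) :
    ∑ i, f (EE G (pt (Function.update c v j) i) (pt (Function.update c v j) i))
      = ∑ i, f (EE G (pt c i) (pt c i))
      + (f (EE G (pt c (c v)) (pt c (c v)) - 2 * dg G (pt c (c v)) v)
          - f (EE G (pt c (c v)) (pt c (c v))))
      + (f (EE G (pt c j) (pt c j) + 2 * dg G (pt c j) v) - f (EE G (pt c j) (pt c j))) := by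
  have := Fintype.sum_eq_add (f := fun i =>
    f (EE G (pt (Function.update c v j) i) (pt (Function.update c v j) i))
     - f (EE G (pt c i) (pt c i))) (c v) j hij (by
      rintro i ⟨h1, h2⟩
      rw [pt_update_other _ _ _ _ h2 h1.symm, sub_self])
  rw [Finset.sum_sub_distrib] at this
  simp only [EE_update_new G c v j hij, EE_update_old G c v j hij] at this
  linarith

/-- optimal partition -/
lemma exOpt (G : SimpleGraph V) (k : ℕ) (c0 : V → Fin k) : ∃ c : V → Fin k,
    ins G c ≤ ins G c0 ∧
    (∀ v j, c v ≠ j → dg G (pt c (c v)) v ≤ dg G (pt c j) v) ∧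
    (∀ v j, c v ≠ j → 1 ≤ dg G (pt c (c v)) v →
      2 * (dg G (pt c (c v)) v : ℝ) < EE G (pt c (c v)) (pt c (c v)) - EE G (pt c j) (pt c j) →
      dg G (pt c (c v)) v + 1 ≤ dg G (pt c j) v) := by
  classical
  obtain ⟨c1, -, h1⟩ := Finset.exists_min_image (Finset.univ : Finset (V → Fin k)) (ins G)
    ⟨c0, by simp⟩
  obtain ⟨c, hc, h2⟩ := Finset.exists_min_image
    ((Finset.univ : Finset (V → Fin k)).filter (fun c => ins G c = ins G c1)) (ins2 G)
    ⟨c1, by simp⟩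
  simp only [Finset.mem_filter, Finset.mem_univ, true_and] at hc h2
  have key : ∀ v j, c v ≠ j → ins G (Function.update c v j) = ins G c
      + 2 * (dg G (pt c j) v) - 2 * (dg G (pt c (c v)) v) := by
    intro v j hj
    have := sum_update G c v j hj id
    simp only [id] at this
    unfold ins
    rw [this]; ring
  have A : ∀ v j, c v ≠ j → dg G (pt c (c v)) v ≤ dg G (pt c j) v := by
    intro v j hj
    have := h1 (Function.update c v j) (Finset.mem_univ _)
    rw [key v j hj, ← hc] at this
    have : (dg G (pt c (c v)) v : ℝ) ≤ dg G (pt c j) v := by linarith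
    exact_mod_cast this
  refine ⟨c, by rw [hc]; exact h1 c0 (Finset.mem_univ _), A, ?_⟩
  intro v j hj h1' hlt
  by_contra hcon
  have heq : dg G (pt c j) v = dg G (pt c (c v)) v := le_antisymm (by omega) (A v j hj)
  have h3 := h2 (Function.update c v j) (by rw [key v j hj, ← hc, heq]; ring)
  have h4 := sum_update G c v j hj (fun t => t ^ 2)
  unfold ins2 at h3
  rw [h4, heq] at h3
  have h1R : (1:ℝ) ≤ dg G (pt c (c v)) v := by exact_mod_cast h1'
  nlinarith

lemma dg_univ (G : SimpleGraph V) {k : ℕ} (c : V → Fin k) (v : V) :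
    dg G Finset.univ v = ∑ j, dg G (pt c j) v := by
  unfold dg pt
  exact (Finset.sum_fiberwise _ _ _).symm

lemma EE_fiber_left (G : SimpleGraph V) {k : ℕ} (c : V → Fin k) (S : Finset V) :
    EE G Finset.univ S = ∑ j, EE G (pt c j) S := by
  unfold EE pt
  exact (Finset.sum_fiberwise _ _ _).symm

lemma EE_fiber_right (G : SimpleGraph V) {k : ℕ} (c : V → Fin k) (S : Finset V) :
    EE G S Finset.univ = ∑ j, EE G S (pt c j) := by
  rw [EE_symm, EE_fiber_left G c]; simp only [EE_symm]

open Classical in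
def Ap (G : SimpleGraph V) : Finset (V × V) := Finset.univ.filter (fun p => G.Adj p.1 p.2)

lemma EE_card (G : SimpleGraph V) (S T : Finset V) :
    EE G S T = (((Ap G).filter (fun p => p.1 ∈ S ∧ p.2 ∈ T)).card : ℝ) := by
  classical
  have : (Ap G).filter (fun p => p.1 ∈ S ∧ p.2 ∈ T) =
      (S ×ˢ T).filter (fun p => G.Adj p.1 p.2) := by
    ext p; simp [Ap]; tauto
  rw [this, Finset.card_filter, Finset.sum_product]
  unfold EE dg
  push_cast
  rfl

lemma EE_univ_card (G : SimpleGraph V) : EE G Finset.univ Finset.univ = ((Ap G).card : ℝ) := by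
  rw [EE_card]; simp

lemma ins_card (G : SimpleGraph V) {k : ℕ} (c : V → Fin k) :
    ins G c = (((Ap G).filter (fun p => c p.1 = c p.2)).card : ℝ) := by
  unfold ins
  simp only [EE_card]
  rw [← Nat.cast_sum]
  congr 1
  rw [Finset.card_eq_sum_card_fiberwise (f := fun p => c p.1) (t := Finset.univ) (by simp)]
  refine Finset.sum_congr rfl (fun i _ => ?_)
  congr 1
  ext p
  simp only [Finset.mem_filter, pt, Finset.mem_univ, true_and]
  constructor
  · rintro ⟨h, h1, h2⟩; exact ⟨⟨h, h1.trans h2.symm⟩, h1⟩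
  · rintro ⟨⟨h, h1⟩, h2⟩; exact ⟨h, h2, h1.symm.trans h2⟩

lemma exColor (G : SimpleGraph V) : ∃ (n : ℕ) (C : V → Fin n),
    (∀ u v, G.Adj u v → C u ≠ C v) ∧ n * n - n ≤ (Ap G).card := by
  classical
  have hex : ∃ n, G.Colorable n := ⟨_, G.colorable_of_fintype⟩
  obtain ⟨C⟩ := Nat.find_spec hex
  have hmin := fun m => Nat.find_min hex (m := m)
  set n := Nat.find hex
  refine ⟨n, C, fun u v h => C.valid h, ?_⟩
  have hsub : (Finset.univ : Finset (Fin n)).offDiag ⊆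
      (Ap G).image (fun p => (C p.1, C p.2)) := by
    rintro ⟨i, j⟩ hij
    simp only [Finset.mem_offDiag, Finset.mem_univ, true_and] at hij
    by_contra hcon
    have hno : ∀ u v, G.Adj u v → C u = i → C v = j → False := by
      intro u v h1 h2 h3
      apply hcon
      simp only [Finset.mem_image, Ap, Finset.mem_filter, Finset.mem_univ, true_and]
      exact ⟨(u, v), h1, by simp [h2, h3]⟩
    have C' : G.Coloring {l : Fin n // l ≠ j} := SimpleGraph.Coloring.mk
      (fun v => if h : C v = j then ⟨i, hij⟩ else ⟨C v, h⟩) (by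
        intro u v huv
        have hv := C.valid huv
        by_cases h1 : C u = j <;> by_cases h2 : C v = j
        · exact absurd (h1.trans h2.symm) hv
        · simp only [h1, h2, dite_true, dite_false, ne_eq, Subtype.mk.injEq]
          intro h3; exact hno v u huv.symm h3.symm h1
        · simp only [h1, h2, dite_true, dite_false, ne_eq, Subtype.mk.injEq]
          intro h3; exact hno u v huv h3 h2
        · simp only [h1, h2, dite_false, ne_eq, Subtype.mk.injEq]
          exact hv)
    have h5 := C'.colorable
    refine hmin _ ?_ h5
    have : Fintype.card {l : Fin n // l ≠ j} < Fintype.card (Fin n) :=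
      Fintype.card_subtype_lt (x := j) (by simp)
    simpa using this
  have h1 := Finset.card_le_card hsub
  have h2 := Finset.card_image_le (s := Ap G) (f := fun p => (C p.1, C p.2))
  rw [Finset.offDiag_card] at h1
  simp only [Finset.card_univ, Fintype.card_fin] at h1
  exact h1.trans h2

lemma exAvg (G : SimpleGraph V) {n k : ℕ} (C : V → Fin n)
    (hC : ∀ u v, G.Adj u v → C u ≠ C v) (f : Fin n → Fin k) : ∃ c : V → Fin k,
    ((Ap G).filter (fun p => c p.1 = c p.2)).card * (n * n - n) ≤
      (Ap G).card * ((Finset.univ : Finset (Fin n)).offDiag.filter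
        (fun p => f p.1 = f p.2)).card := by
  classical
  set Q := ((Finset.univ : Finset (Fin n)).offDiag.filter (fun p => f p.1 = f p.2)).card with hQ
  let K : Fin n × Fin n → ℕ := fun p =>
    ∑ σ : Equiv.Perm (Fin n), if f (σ p.1) = f (σ p.2) then 1 else 0
  have hK : ∀ p q : Fin n × Fin n, p.1 ≠ p.2 → q.1 ≠ q.2 → K p = K q := by
    intro p q hp hq
    obtain ⟨τ, h1, h2⟩ : ∃ τ : Equiv.Perm (Fin n), τ q.1 = p.1 ∧ τ q.2 = p.2 := by
      obtain ⟨g, hg⟩ := MulAction.is_two_pretransitive_iff.mp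
        (Equiv.Perm.isMultiplyPretransitive (Fin n) 2) hq hp
      exact ⟨g, hg⟩
    simp only [K]
    rw [← h1, ← h2]
    exact Fintype.sum_equiv (Equiv.mulRight τ) _ _ (fun σ => by
      simp only [Equiv.coe_mulRight, Equiv.Perm.mul_apply]; congr)
  have hoff : ∀ σ : Equiv.Perm (Fin n),
      (∑ p ∈ (Finset.univ : Finset (Fin n)).offDiag, if f (σ p.1) = f (σ p.2) then 1 else 0) = Q := by
    intro σ
    rw [hQ, Finset.card_filter]
    refine Finset.sum_equiv (Equiv.prodCongr σ σ) ?_ ?_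
    · intro p; simp
    · intro p _; simp
  have hcardoff : ((Finset.univ : Finset (Fin n)).offDiag).card = n * n - n := by
    rw [Finset.offDiag_card]; simp
  have hsumK : ∀ p : Fin n × Fin n, p.1 ≠ p.2 → (n * n - n) * K p =
      Fintype.card (Equiv.Perm (Fin n)) * Q := by
    intro p hp
    have h1 : ∑ q ∈ (Finset.univ : Finset (Fin n)).offDiag, K q = (n * n - n) * K p := by
      rw [← hcardoff, ← smul_eq_mul, ← Finset.sum_const]
      refine Finset.sum_congr rfl (fun q hq => hK q p ?_ hp)
      simpa using hq
    rw [← h1]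
    simp only [K]
    rw [Finset.sum_comm, Finset.sum_congr rfl (fun σ _ => hoff σ)]
    simp
  by_contra hcon
  push Not at hcon
  have h1 : ∑ σ : Equiv.Perm (Fin n), (Ap G).card * Q <
      ∑ σ : Equiv.Perm (Fin n),
        ((Ap G).filter (fun p => f (σ (C p.1)) = f (σ (C p.2)))).card * (n * n - n) := by
    refine Finset.sum_lt_sum_of_nonempty ⟨1, by simp⟩ (fun σ _ => ?_)
    exact hcon (fun v => f (σ (C v)))
  rw [← Finset.sum_mul _ _ (n * n - n)] at h1
  simp only [Finset.card_filter] at h1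
  rw [Finset.sum_comm] at h1
  have h2 : (∑ p ∈ Ap G, ∑ σ : Equiv.Perm (Fin n),
      if f (σ (C p.1)) = f (σ (C p.2)) then 1 else 0) * (n * n - n)
      = ∑ p ∈ Ap G, Fintype.card (Equiv.Perm (Fin n)) * Q := by
    rw [Finset.sum_mul]
    refine Finset.sum_congr rfl (fun p hp => ?_)
    rw [← hsumK (C p.1, C p.2) (hC _ _ (by simpa [Ap] using hp)), mul_comm]
  rw [h2] at h1
  simp only [Finset.sum_const, smul_eq_mul, Finset.card_univ] at h1
  rw [← mul_assoc, ← mul_assoc, mul_comm (Ap G).card] at h1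
  exact lt_irrefl _ h1

lemma cnt3 (n r : ℕ) (hr : r < 3) :
    ((Finset.range n).filter (fun p => p % 3 = r)).card = (n + 2 - r) / 3 := by
  induction n with
  | zero => interval_cases r <;> simp
  | succ n ih =>
    rw [Finset.range_add_one, Finset.filter_insert]
    split_ifs with h
    · rw [Finset.card_insert_of_notMem (by simp), ih]; omega
    · rw [ih]; omega

lemma cnt2 (n r : ℕ) (hr : r < 2) :
    ((Finset.range n).filter (fun p => p % 2 = r)).card = (n + 1 - r) / 2 := by
  induction n with
  | zero => interval_cases r <;> simp
  | succ n ih =>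
    rw [Finset.range_add_one, Finset.filter_insert]
    split_ifs with h
    · rw [Finset.card_insert_of_notMem (by simp), ih]; omega
    · rw [ih]; omega

lemma offdiag_cnt {n k : ℕ} (f : Fin n → Fin k) :
    ((Finset.univ : Finset (Fin n)).offDiag.filter (fun p => f p.1 = f p.2)).card + n =
      ∑ i, ((Finset.univ : Finset (Fin n)).filter (fun p => f p = i)).card ^ 2 := by
  classical
  have h0 : ∑ i, ((Finset.univ : Finset (Fin n)).filter (fun p => f p = i)).card ^ 2 =
      ((Finset.univ : Finset (Fin n × Fin n)).filter (fun p => f p.1 = f p.2)).card := by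
    rw [Finset.card_eq_sum_card_fiberwise (f := fun p => f p.1) (t := Finset.univ) (by simp)]
    refine Finset.sum_congr rfl (fun i _ => ?_)
    rw [sq, ← Finset.card_product]
    congr 1
    ext p
    simp only [Finset.mem_filter, Finset.mem_product, Finset.mem_univ, true_and]
    constructor
    · rintro ⟨h1, h2⟩; exact ⟨h1.trans h2.symm, h1⟩
    · rintro ⟨h1, h2⟩; exact ⟨h2, h1.symm.trans h2⟩
  rw [h0]
  have h1 : ((Finset.univ : Finset (Fin n × Fin n)).filter (fun p => f p.1 = f p.2)) =
      ((Finset.univ : Finset (Fin n)).offDiag.filter (fun p => f p.1 = f p.2)) ∪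
        (Finset.univ : Finset (Fin n)).diag := by
    ext ⟨p, q⟩
    simp only [Finset.mem_filter, Finset.mem_union, Finset.mem_offDiag, Finset.mem_diag,
      Finset.mem_univ, true_and]
    constructor
    · intro h; by_cases hpq : p = q
      · exact Or.inr hpq
      · exact Or.inl ⟨hpq, h⟩
    · rintro (⟨_, h⟩ | h)
      · exact h
      · rw [h]
  rw [h1, Finset.card_union_of_disjoint, Finset.diag_card]
  · simp
  · rw [Finset.disjoint_left]
    rintro p hp hq
    simp at hp hq
    exact hp.1 hq

lemma fin_cnt {n : ℕ} (f : ℕ → ℕ) (i : ℕ) :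
    ((Finset.univ : Finset (Fin n)).filter (fun p => f p.val = i)).card =
    ((Finset.range n).filter (fun p => f p = i)).card := by
  rw [Finset.card_filter, Finset.card_filter,
    Fin.sum_univ_eq_sum_range (fun p => if f p = i then 1 else 0)]

lemma exQ3 (n : ℕ) : ∃ f : Fin n → Fin 3,
    3 * (((Finset.univ : Finset (Fin n)).offDiag.filter (fun p => f p.1 = f p.2)).card : ℝ) ≤
      ((n : ℝ) - 1) * (n - 2) := by
  refine ⟨fun p => ⟨p.val % 3, Nat.mod_lt _ (by norm_num)⟩, ?_⟩
  have h := offdiag_cnt (n := n) (fun p : Fin n => (⟨p.val % 3, Nat.mod_lt _ (by norm_num)⟩ : Fin 3))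
  simp only [Fin.sum_univ_three, Fin.ext_iff, Fin.val_zero, Fin.val_one, Fin.val_two] at h
  simp only [fin_cnt (n := n) (fun p => p % 3)] at h
  rw [cnt3 n 0 (by norm_num), cnt3 n 1 (by norm_num), cnt3 n 2 (by norm_num)] at h
  have key : 3 * (((n + 2 - 0) / 3) ^ 2 + ((n + 2 - 1) / 3) ^ 2 + ((n + 2 - 2) / 3) ^ 2) ≤ n ^ 2 + 2 := by
    obtain ⟨a, b, hb, rfl⟩ : ∃ a b, b < 3 ∧ n = 3 * a + b :=
      ⟨n / 3, n % 3, Nat.mod_lt _ (by norm_num), (Nat.div_add_mod n 3).symm⟩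
    interval_cases b
    · rw [show (3 * a + 0 + 2 - 0) / 3 = a by omega, show (3 * a + 0 + 2 - 1) / 3 = a by omega,
        show (3 * a + 0 + 2 - 2) / 3 = a by omega]; nlinarith
    · rw [show (3 * a + 1 + 2 - 0) / 3 = a + 1 by omega, show (3 * a + 1 + 2 - 1) / 3 = a by omega,
        show (3 * a + 1 + 2 - 2) / 3 = a by omega]; nlinarith
    · rw [show (3 * a + 2 + 2 - 0) / 3 = a + 1 by omega,
        show (3 * a + 2 + 2 - 1) / 3 = a + 1 by omega,
        show (3 * a + 2 + 2 - 2) / 3 = a by omega]; nlinarith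
  rw [← h] at key
  have key' := (Nat.cast_le (α := ℝ)).mpr key
  push_cast at key'
  simp only [Fin.ext_iff] at key' ⊢
  nlinarith

lemma exQ2 (n : ℕ) : ∃ f : Fin n → Fin 2,
    2 * (((Finset.univ : Finset (Fin n)).offDiag.filter (fun p => f p.1 = f p.2)).card : ℝ) ≤
      ((n : ℝ) - 1) * (n - 1) := by
  refine ⟨fun p => ⟨p.val % 2, Nat.mod_lt _ (by norm_num)⟩, ?_⟩
  have h := offdiag_cnt (n := n) (fun p : Fin n => (⟨p.val % 2, Nat.mod_lt _ (by norm_num)⟩ : Fin 2))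
  simp only [Fin.sum_univ_two, Fin.ext_iff, Fin.val_zero, Fin.val_one] at h
  simp only [fin_cnt (n := n) (fun p => p % 2)] at h
  rw [cnt2 n 0 (by norm_num), cnt2 n 1 (by norm_num)] at h
  have key : 2 * (((n + 1 - 0) / 2) ^ 2 + ((n + 1 - 1) / 2) ^ 2) ≤ n ^ 2 + 1 := by
    obtain ⟨a, b, hb, rfl⟩ : ∃ a b, b < 2 ∧ n = 2 * a + b :=
      ⟨n / 2, n % 2, Nat.mod_lt _ (by norm_num), (Nat.div_add_mod n 2).symm⟩
    interval_cases b
    · rw [show (2 * a + 0 + 1 - 0) / 2 = a by omega, show (2 * a + 0 + 1 - 1) / 2 = a by omega]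
      nlinarith
    · rw [show (2 * a + 1 + 1 - 0) / 2 = a + 1 by omega,
        show (2 * a + 1 + 1 - 1) / 2 = a by omega]; nlinarith
  rw [← h] at key
  have key' := (Nat.cast_le (α := ℝ)).mpr key
  push_cast at key'
  simp only [Fin.ext_iff] at key' ⊢
  nlinarith

/-- common form: `r * Q ≤ (n-1)(n-t)` gives `r * ins * (h+1) ≤ N (h + 1 - t)`. -/
lemma edw (G : SimpleGraph V) {k : ℕ} (r t : ℝ) (ht : 0 ≤ t) (hr : 0 < r)
    (hf : ∀ n : ℕ, ∃ f : Fin n → Fin k,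
      r * (((Finset.univ : Finset (Fin n)).offDiag.filter (fun p => f p.1 = f p.2)).card : ℝ) ≤
      ((n : ℝ) - 1) * (n - t)) (h : ℝ) (hh : 0 ≤ h)
    (hN : EE G Finset.univ Finset.univ = h * (h + 1)) :
    ∃ c : V → Fin k, r * ins G c ≤ h * (h + 1 - t) := by
  obtain ⟨n, C, hC, hn⟩ := exColor G
  obtain ⟨f, hf⟩ := hf n
  obtain ⟨c, hc⟩ := exAvg G C hC f
  refine ⟨c, ?_⟩
  rw [ins_card]
  rw [EE_univ_card] at hN
  set I := ((Ap G).filter (fun p => c p.1 = c p.2)).card with hI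
  set Q := ((Finset.univ : Finset (Fin n)).offDiag.filter (fun p => f p.1 = f p.2)).card
  rcases Nat.lt_or_ge n 2 with h2 | h2
  · have hA : Ap G = ∅ := by
      rw [Finset.eq_empty_iff_forall_notMem]
      intro p hp
      have := hC p.1 p.2 (by simpa [Ap] using hp)
      apply this
      have := (C p.1).isLt
      have := (C p.2).isLt
      ext; omega
    have hI0 : I = 0 := by rw [hI, hA]; simp
    rw [hA] at hN
    simp at hN
    rw [hI0]
    rcases hN with hN | hN
    · simp [hN]
    · exfalso; linarith
  · have hnn : n ≤ n * n := Nat.le_mul_self n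
    have hcR := (Nat.cast_le (α := ℝ)).mpr hc
    have hnR := (Nat.cast_le (α := ℝ)).mpr hn
    push_cast [Nat.cast_sub hnn] at hcR hnR
    rw [hN] at hcR hnR
    have h2R : (2:ℝ) ≤ n := by exact_mod_cast h2
    have hnh : (n:ℝ) ≤ h + 1 := by nlinarith
    have hh0 : 0 ≤ h * (h + 1) := by positivity
    have s1 : r * (I * (n * n - n)) ≤ h * (h + 1) * ((n - 1) * (n - t)) := by
      calc r * ((I:ℝ) * (n * n - n)) ≤ r * (h * (h + 1) * Q) := by gcongr
        _ = h * (h + 1) * (r * Q) := by ring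
        _ ≤ _ := by gcongr
    have s2 : r * I * n ≤ h * (h + 1) * (n - t) := by
      have hp : (0:ℝ) < n - 1 := by linarith
      refine le_of_mul_le_mul_left ?_ hp
      linarith
    have s3 : r * I * n ≤ h * (h + 1 - t) * n := by
      nlinarith [mul_nonneg (mul_nonneg hh ht) (sub_nonneg.mpr hnh)]
    exact le_of_mul_le_mul_right s3 (by linarith)

lemma edw3 (G : SimpleGraph V) (x : ℝ) (hx : 0 ≤ x)
    (hN : EE G Finset.univ Finset.univ = 3 * x * (3 * x + 1)) :
    ∃ c : V → Fin 3, ins G c ≤ x * (3 * x - 1) := by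
  obtain ⟨c, hc⟩ := edw G 3 2 (by norm_num) (by norm_num) exQ3 (3 * x) (by linarith) hN
  exact ⟨c, by linarith⟩

lemma edw2 (G : SimpleGraph V) (y : ℝ) (hy : 0 ≤ y)
    (hN : EE G Finset.univ Finset.univ = 2 * y * (2 * y + 1)) :
    ∃ c : V → Fin 2, ins G c ≤ 2 * y ^ 2 := by
  obtain ⟨c, hc⟩ := edw G 2 1 (by norm_num) (by norm_num) exQ2 (2 * y) (by linarith) hN
  exact ⟨c, by linarith⟩

lemma EE_W (G : SimpleGraph V) (S W : Finset V) (hW : W ⊆ S) :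
    EE G W S = EE G W W + EE G W (S \ W) := by
  rw [← EE_union_right _ _ _ _ Finset.disjoint_sdiff, Finset.union_sdiff_of_subset hW]

lemma EE_split (G : SimpleGraph V) (S W : Finset V) (hW : W ⊆ S) :
    EE G S S = EE G W W + 2 * EE G W (S \ W) + EE G (S \ W) (S \ W) := by
  conv_lhs => rw [← Finset.union_sdiff_of_subset hW]
  rw [EE_union_left _ _ _ _ Finset.disjoint_sdiff, EE_union_right _ _ _ _ Finset.disjoint_sdiff,
    EE_union_right _ _ _ _ Finset.disjoint_sdiff, EE_symm G (S \ W) W]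
  ring

lemma EE_le_of_dg (G : SimpleGraph V) (W S T : Finset V) (h : ∀ v ∈ W, dg G S v ≤ dg G T v) :
    EE G W S ≤ EE G W T := by
  unfold EE
  exact Finset.sum_le_sum (fun v hv => by exact_mod_cast h v hv)

lemma EE_lt_of_dg (G : SimpleGraph V) (W S T : Finset V) (h : ∀ v ∈ W, dg G S v ≤ dg G T v)
    (y : V) (hy : y ∈ W) (h2 : dg G S y + 1 ≤ dg G T y) :
    EE G W S + 1 ≤ EE G W T := by
  unfold EE
  rw [← Nat.cast_sum, ← Nat.cast_sum]
  have := Finset.sum_lt_sum h ⟨y, hy, h2⟩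
  exact_mod_cast this

lemma jud2 (G : SimpleGraph V) (y : ℝ) (hy : 0 ≤ y)
    (hN : EE G Finset.univ Finset.univ = 2 * y * (2 * y + 1)) :
    ∃ c : V → Fin 2, (∀ i, EE G (pt c i) (pt c i) ≤ y * (y + 1)) ∧ ins G c ≤ 2 * y ^ 2 := by
  obtain ⟨c0, hc0⟩ := edw2 G y hy hN
  obtain ⟨c, hc, hopt, -⟩ := exOpt G 2 c0
  by_cases hall : ∀ i, EE G (pt c i) (pt c i) ≤ y * (y + 1)
  · exact ⟨c, hall, hc.trans hc0⟩
  push Not at hall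
  obtain ⟨i, hi⟩ := hall
  obtain ⟨W, hWS, h1, h2, h3, -, -, -⟩ := exW G (pt c i) y hy hi
  obtain ⟨j, hij, hsum⟩ : ∃ j, i ≠ j ∧ ∀ f : Fin 2 → ℝ, ∑ l, f l = f i + f j := by
    fin_cases i
    · exact ⟨1, by decide, fun f => by simp [Fin.sum_univ_two]⟩
    · exact ⟨0, by decide, fun f => by simp [Fin.sum_univ_two, add_comm]⟩
  have hmem : ∀ v ∈ W, c v = i := fun v hv => by simpa [pt] using hWS hv
  have hj : EE G W (pt c i) ≤ EE G W (pt c j) := EE_le_of_dg _ _ _ _ (fun v hv => by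
    have := hopt v j (by rw [hmem v hv]; exact hij)
    rwa [hmem v hv] at this)
  have hu := EE_fiber_right G c W
  rw [hsum] at hu
  have hu2 := EE_W G Finset.univ W (Finset.subset_univ _)
  have hs := EE_split G Finset.univ W (Finset.subset_univ _)
  have hWi := EE_W G _ W hWS
  let c' : V → Fin 2 := fun v => if v ∈ W then 0 else 1
  have p0 : pt c' 0 = W := by ext v; simp [pt, c']
  have p1 : pt c' 1 = Finset.univ \ W := by ext v; simp [pt, c']
  refine ⟨c', ?_, ?_⟩
  · intro l
    fin_cases l
    · change EE G (pt c' 0) (pt c' 0) ≤ _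
      rw [p0]; exact h1
    · change EE G (pt c' 1) (pt c' 1) ≤ _
      rw [p1]; nlinarith
  · unfold ins
    rw [Fin.sum_univ_two, p0, p1]
    nlinarith

def del (G : SimpleGraph V) (W : Finset V) : SimpleGraph V where
  Adj u v := G.Adj u v ∧ u ∉ W ∧ v ∉ W
  symm := ⟨fun u v h => ⟨h.1.symm, h.2.2, h.2.1⟩⟩
  loopless := ⟨fun u h => G.loopless.irrefl u h.1⟩

lemma EE_del (G : SimpleGraph V) (W S T : Finset V) :
    EE (del G W) S T = EE G (S \ W) (T \ W) := by
  rw [EE_card, EE_card]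
  congr 2
  ext p
  have h : (del G W).Adj p.1 p.2 ↔ (G.Adj p.1 p.2 ∧ p.1 ∉ W ∧ p.2 ∉ W) := Iff.rfl
  simp only [Ap, Finset.mem_filter, Finset.mem_univ, true_and, Finset.mem_sdiff, h]
  tauto

lemma fin3 (i : Fin 3) : ∃ j l, i ≠ j ∧ i ≠ l ∧ ∀ f : Fin 3 → ℝ, ∑ l, f l = f i + f j + f l := by
  fin_cases i
  · exact ⟨1, 2, by decide, by decide, fun f => by simp [Fin.sum_univ_three]⟩
  · exact ⟨0, 2, by decide, by decide, fun f => by simp [Fin.sum_univ_three]; ring⟩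
  · exact ⟨0, 1, by decide, by decide, fun f => by simp [Fin.sum_univ_three]; ring⟩

set_option maxHeartbeats 2000000 in
lemma jud3 (G : SimpleGraph V) (x : ℝ) (hx : 0 ≤ x)
    (hN : EE G Finset.univ Finset.univ = 3 * x * (3 * x + 1)) :
    ∃ c : V → Fin 3, (∀ i, EE G (pt c i) (pt c i) ≤ x * (x + 1)) ∧
      ins G c ≤ x * (3 * x - 1) := by
  obtain ⟨c0, hc0⟩ := edw3 G x hx hN
  obtain ⟨c, hc, hopt, htie⟩ := exOpt G 3 c0
  by_cases hall : ∀ i, EE G (pt c i) (pt c i) ≤ x * (x + 1)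
  · exact ⟨c, hall, hc.trans hc0⟩
  push Not at hall
  obtain ⟨i, hi⟩ := hall
  obtain ⟨W, hWS, h1, h2, h3, h4, h5, h6⟩ := exW G (pt c i) x hx hi
  obtain ⟨j, l, hij, hil, hsum, hjl⟩ : ∃ j l, i ≠ j ∧ i ≠ l ∧
      (∀ f : Fin 3 → ℝ, ∑ l, f l = f i + f j + f l) ∧
      EE G (pt c j) (pt c j) ≤ EE G (pt c l) (pt c l) := by
    obtain ⟨j, l, h1, h2, h3⟩ := fin3 i
    rcases le_total (EE G (pt c j) (pt c j)) (EE G (pt c l) (pt c l)) with h | h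
    · exact ⟨j, l, h1, h2, h3, h⟩
    · exact ⟨l, j, h2, h1, fun f => by rw [h3]; ring, h⟩
  have hI : EE G (pt c i) (pt c i) + EE G (pt c j) (pt c j) + EE G (pt c l) (pt c l)
      ≤ x * (3 * x - 1) := by
    have := hc.trans hc0
    unfold ins at this
    rwa [hsum] at this
  have hmem : ∀ v ∈ W, c v = i := fun v hv => by simpa [pt] using hWS hv
  have hdj : ∀ v ∈ W, dg G (pt c i) v ≤ dg G (pt c j) v := fun v hv => by
    have := hopt v j (by rw [hmem v hv]; exact hij)
    rwa [hmem v hv] at this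
  have hdl : ∀ v ∈ W, dg G (pt c i) v ≤ dg G (pt c l) v := fun v hv => by
    have := hopt v l (by rw [hmem v hv]; exact hil)
    rwa [hmem v hv] at this
  have hj := EE_le_of_dg _ _ _ _ hdj
  have hl := EE_le_of_dg _ _ _ _ hdl
  have hu := EE_fiber_right G c W
  rw [hsum] at hu
  have hu2 := EE_W G Finset.univ W (Finset.subset_univ _)
  have hs := EE_split G Finset.univ W (Finset.subset_univ _)
  have hsi := EE_split G _ W hWS
  have hWi := EE_W G _ W hWS
  have hrest := EE_nonneg G (pt c i \ W) (pt c i \ W)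
  set A := EE G W W with hA
  set d := EE G W (pt c i \ W) with hd
  set E' := EE G (Finset.univ \ W) (Finset.univ \ W) with hE'
  obtain ⟨u, hu_def⟩ : ∃ u, 2 * u = A + 2 * d - x * (x + 1) := ⟨(A + 2 * d - x * (x + 1)) / 2, by ring⟩
  obtain ⟨u1, hu1_def⟩ : ∃ u1, 2 * u1 = EE G (pt c i) (pt c i) - x * (x + 1) :=
    ⟨(EE G (pt c i) (pt c i) - x * (x + 1)) / 2, by ring⟩
  have hu0 : 0 < u := by linarith
  have huu : u ≤ u1 := by linarith
  -- main estimate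
  have main : ∃ q : ℝ, 1 ≤ q ∧ E' ≤ 6 * x ^ 2 - 2 * A - 2 * q := by
    by_cases hlow : ∃ y ∈ W, (dg G (pt c i) y : ℝ) < x + 3 * u1 / 2
    · obtain ⟨y, hyW, hy⟩ := hlow
      have ht := htie y j (by rw [hmem y hyW]; exact hij)
      rw [hmem y hyW] at ht
      have ht' := ht (h4 y hyW) (by nlinarith)
      have hj' := EE_lt_of_dg _ _ _ _ hdj y hyW ht'
      exact ⟨3 * u + 1, by linarith, by nlinarith⟩
    · push Not at hlow
      have hlowsum : (W.card : ℝ) * (x + 3 * u1 / 2) ≤ EE G W (pt c i) := by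
        unfold EE
        rw [← nsmul_eq_mul]
        exact Finset.card_nsmul_le_sum _ _ _ hlow
      refine ⟨3 * u, ?_, by nlinarith⟩
      rcases le_total (x + 1) (W.card : ℝ) with hw | hw
      · have : (x + 1) * x ≤ EE G W (pt c i) := by
          refine le_trans ?_ hlowsum
          have : x ≤ x + 3 * u1 / 2 := by linarith
          gcongr
        nlinarith
      · exfalso
        have hAw := EE_self_le G W
        have hw1 : (1:ℝ) ≤ W.card := by
          have : (0:ℝ) < W.card := by linarith
          have : 0 < W.card := by exact_mod_cast this
          exact_mod_cast this
        have hq : 0 ≤ ((W.card : ℝ) - x) * (x + 1 - W.card) :=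
          mul_nonneg (by linarith) (by linarith)
        have hq2 : 0 ≤ ((W.card : ℝ) - 1) * u1 := mul_nonneg (by linarith) (by linarith)
        nlinarith
  obtain ⟨q, hq1, hqE⟩ := main
  have hE0 : 0 ≤ E' := EE_nonneg _ _ _
  obtain ⟨y, hy0, hy⟩ : ∃ y : ℝ, 0 ≤ y ∧ E' = 2 * y * (2 * y + 1) := by
    have hsq := Real.sq_sqrt (show 0 ≤ E' + 1 / 4 by linarith)
    have hge : (1 / 2 : ℝ) ≤ Real.sqrt (E' + 1 / 4) := by
      apply Real.le_sqrt_of_sq_le; linarith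
    refine ⟨(Real.sqrt (E' + 1 / 4) - 1 / 2) / 2, by linarith, ?_⟩
    nlinarith
  have hyx : y ≤ x := by
    have : E' ≤ 2 * x * (2 * x + 1) := by nlinarith
    by_contra hcon
    push Not at hcon
    nlinarith
  have hin : A + 2 * y ^ 2 ≤ x * (3 * x - 1) := by
    rcases le_total (x - q) y with h | h
    · nlinarith
    · have hqx : q ≤ x := by linarith
      have : y ^ 2 ≤ (x - q) ^ 2 := by gcongr
      nlinarith
  obtain ⟨c', hc1, hc2⟩ := jud2 (del G W) y hy0 (by rw [EE_del]; exact hy)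
  let c2 : V → Fin 3 := fun v => if v ∈ W then 0 else if c' v = 0 then 1 else 2
  have p0 : pt c2 0 = W := by
    ext v; by_cases hv : v ∈ W <;> by_cases hv2 : c' v = 0 <;> simp [pt, c2, hv, hv2]
  have p1 : pt c2 1 = pt c' 0 \ W := by
    ext v; by_cases hv : v ∈ W <;> by_cases hv2 : c' v = 0 <;> simp [pt, c2, hv, hv2]
  have p2 : pt c2 2 = pt c' 1 \ W := by
    ext v
    by_cases hv : v ∈ W <;> by_cases hv2 : c' v = 0
    · simp [pt, c2, hv]
    · simp [pt, c2, hv]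
    · simp [pt, c2, hv, hv2]
    · have : c' v = 1 := by omega
      simp [pt, c2, hv, this]
  unfold ins at hc2
  rw [Fin.sum_univ_two] at hc2
  have hc10 := hc1 0
  have hc11 := hc1 1
  rw [EE_del] at hc10 hc11
  rw [EE_del, EE_del] at hc2
  rw [← p1] at hc10 hc2
  rw [← p2] at hc11 hc2
  have hyy : y * (y + 1) ≤ x * (x + 1) := by gcongr
  refine ⟨c2, ?_, ?_⟩
  · intro t
    fin_cases t
    · change EE G (pt c2 0) (pt c2 0) ≤ _
      rw [p0]; exact h1
    · exact hc10.trans hyy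
    · exact hc11.trans hyy
  · unfold ins
    rw [Fin.sum_univ_three, p0]
    linarith

end JP

/-- Every graph with `m` edges admits a 3-partition `(V₁,V₂,V₃)` with
`max eᵢ(Vᵢ) ≤ m/9 + h(m)/9` and `e(V₁,V₂,V₃) ≥ (2/3)m + (1/3)h(m)`. -/
theorem stmt_2 {V : Type*} [Fintype V] [DecidableEq V]
    (G : SimpleGraph V) [DecidableRel G.Adj] (m : ℕ) (hm : m = G.edgeFinset.card) :
    ∃ P : Fin 3 → Finset V, IsKPartition P ∧
      (∀ i : Fin 3, (eIn G (P i) : ℝ) ≤ (m : ℝ) / 9 + (1 / 9) * hfun m) ∧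
      (2 / 3 : ℝ) * m + (1 / 3) * hfun m ≤ (crossTotal G P : ℝ) := by
  have hA : (Ap G).card = 2 * m := by
    rw [hm, ← G.sum_degrees_eq_twice_card_edges]
    have : ((Ap G).card : ℝ) = ((∑ v, G.degree v : ℕ) : ℝ) := by
      rw [← EE_univ_card]
      unfold EE
      push_cast
      refine Finset.sum_congr rfl (fun v _ => ?_)
      congr 1
      rw [← G.card_neighborFinset_eq_degree, G.neighborFinset_eq_filter, Finset.card_filter]
      unfold dg
      refine Finset.sum_congr rfl (fun u _ => ?_)
      congr
    exact_mod_cast this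
  have hN : EE G Finset.univ Finset.univ = 2 * m := by
    rw [EE_univ_card, hA]; push_cast; ring
  have hm0 : (0:ℝ) ≤ m := by positivity
  have hsq := Real.sq_sqrt (show (0:ℝ) ≤ 2 * m + 1 / 4 by linarith)
  have hge : (1 / 2 : ℝ) ≤ Real.sqrt (2 * m + 1 / 4) := by
    apply Real.le_sqrt_of_sq_le; linarith
  obtain ⟨x, hx⟩ : ∃ x, 3 * x = hfun m := ⟨hfun m / 3, by ring⟩
  have hx0 : 0 ≤ x := by unfold hfun at hx; linarith
  have hxm : (2 * m : ℝ) = 3 * x * (3 * x + 1) := by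
    rw [hx]; unfold hfun; nlinarith
  obtain ⟨c, hc1, hc2⟩ := jud3 G x hx0 (by rw [hN, hxm])
  have hcard : ∀ S T : Finset V,
      (((Finset.univ.filter (fun p : V × V => G.Adj p.1 p.2 ∧ p.1 ∈ S ∧ p.2 ∈ T)).card : ℕ) : ℝ)
        = EE G S T := by
    intro S T
    rw [EE_card]
    congr 2
    ext p
    simp [Ap]
  refine ⟨pt c, ⟨?_, ?_⟩, ?_, ?_⟩
  · intro i j hij
    rw [Finset.disjoint_left]
    intro v h1 h2
    simp only [pt, Finset.mem_filter, Finset.mem_univ, true_and] at h1 h2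
    exact hij (h1.symm.trans h2)
  · intro v; exact ⟨c v, by simp [pt]⟩
  · intro i
    have h1 : (eIn G (pt c i) : ℝ) ≤ EE G (pt c i) (pt c i) / 2 := by
      unfold eIn
      refine Nat.cast_div_le.trans ?_
      rw [hcard]; norm_num
    have := hc1 i
    rw [← hx]
    nlinarith
  · have h1 : (crossTotal G (pt c) : ℝ) = EE G (pt c 0) (pt c 1) + EE G (pt c 0) (pt c 2)
        + EE G (pt c 1) (pt c 2) := by
      rw [← hcard, ← hcard, ← hcard]
      unfold crossTotal eCross
      simp [Fin.sum_univ_three]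
    have h2 := EE_fiber_left G c Finset.univ
    simp only [Fin.sum_univ_three, EE_fiber_right G c] at h2
    rw [EE_symm G (pt c 1) (pt c 0), EE_symm G (pt c 2) (pt c 0),
      EE_symm G (pt c 2) (pt c 1)] at h2
    have h3 := EE_fiber_right G c Finset.univ
    rw [Fin.sum_univ_three] at h3
    unfold ins at hc2
    rw [Fin.sum_univ_three] at hc2
    rw [h1, ← hx]
    nlinarith
end

section
/- Let k ≥ 3 be an integer and let G be a finite simple graph with m < 2k² edges. Then G admits a k-partition (V_1, …, V_k) such that (i) max_{1≤i≤k} e(V_i) ≤ m/k² + (k−1)/(2k²)·h(m), and (ii) e(V_1, …, V_k) ≥ (k−1)/k·m + (k−1)/(2k)·h(m) − (k−2)²/(8k). -/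
open Finset

variable {V : Type*} [Fintype V] [DecidableEq V]

namespace KP

set_option linter.unusedSectionVars false

section basic
variable {W : Type*} [DecidableEq W] (G : SimpleGraph W) [DecidableRel G.Adj]

/-- degree into a set -/
def dg (U : Finset W) (v : W) : ℕ := (U.filter (fun w => G.Adj v w)).card

/-- twice the number of edges inside a set -/
def DD (U : Finset W) : ℕ := ∑ v ∈ U, dg G U v

/-- adjacency indicator -/
def ad (v w : W) : ℕ := if G.Adj v w then 1 else 0

theorem ad_le (v w : W) : ad G v w ≤ 1 := by unfold ad; split_ifs <;> simp

theorem ad_comm (v w : W) : ad G v w = ad G w v := by unfold ad; simp [G.adj_comm]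

theorem ad_self (v : W) : ad G v v = 0 := by unfold ad; simp

theorem dg_eq_sum (U : Finset W) (v : W) : dg G U v = ∑ w ∈ U, ad G v w := by
  unfold dg ad; rw [Finset.card_filter]

theorem DD_eq_sum (U : Finset W) : DD G U = ∑ v ∈ U, ∑ w ∈ U, ad G v w := by
  unfold DD; simp only [dg_eq_sum]

theorem dg_sdiff {S U : Finset W} (h : S ⊆ U) (v : W) :
    dg G (U \ S) v + dg G S v = dg G U v := by
  simp only [dg_eq_sum]; exact Finset.sum_sdiff h

theorem cross_comm (S T : Finset W) : ∑ v ∈ S, dg G T v = ∑ v ∈ T, dg G S v := by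
  simp only [dg_eq_sum]; rw [Finset.sum_comm]
  refine Finset.sum_congr rfl fun x _ => Finset.sum_congr rfl fun y _ => ad_comm G _ _

theorem DD_sdiff {S U : Finset W} (h : S ⊆ U) :
    DD G (U \ S) + 2 * ∑ v ∈ S, dg G U v = DD G U + DD G S := by
  have h1 : DD G U = ∑ v ∈ U \ S, dg G U v + ∑ v ∈ S, dg G U v := by
    unfold DD; exact (Finset.sum_sdiff h).symm
  have h2 : ∑ v ∈ U \ S, dg G U v = DD G (U \ S) + ∑ v ∈ U \ S, dg G S v := by
    unfold DD; rw [← Finset.sum_add_distrib]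
    exact Finset.sum_congr rfl fun v _ => (dg_sdiff G h v).symm
  have h3 : ∑ v ∈ S, dg G U v = ∑ v ∈ S, dg G (U \ S) v + DD G S := by
    unfold DD; rw [← Finset.sum_add_distrib]
    exact Finset.sum_congr rfl fun v _ => (dg_sdiff G h v).symm
  have h4 := cross_comm G (U \ S) S
  omega

theorem dg_insert {a : W} {S : Finset W} (h : a ∉ S) (v : W) :
    dg G (insert a S) v = ad G v a + dg G S v := by
  simp only [dg_eq_sum]; exact Finset.sum_insert h

theorem dg_singleton (a v : W) : dg G {a} v = ad G v a := by simp [dg_eq_sum]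

theorem DD_singleton (a : W) : DD G {a} = 0 := by simp [DD_eq_sum, ad_self]

theorem DD_insert {a : W} {S : Finset W} (h : a ∉ S) :
    DD G (insert a S) = DD G S + 2 * dg G S a := by
  have h1 := DD_sdiff G (S := {a}) (U := insert a S) (by simp)
  have h2 : insert a S \ {a} = S := by
    ext x; simp only [Finset.mem_sdiff, Finset.mem_insert, Finset.mem_singleton]
    constructor
    · tauto
    · intro hx; exact ⟨Or.inr hx, fun e => h (e ▸ hx)⟩
  rw [h2, DD_singleton, Finset.sum_singleton, dg_insert G h, ad_self] at h1
  omega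

theorem DD_erase {a : W} {U : Finset W} (h : a ∈ U) :
    DD G (U.erase a) + 2 * dg G U a = DD G U := by
  have h1 := DD_sdiff G (S := {a}) (U := U) (by simpa using h)
  rw [DD_singleton, Finset.sum_singleton, Finset.sdiff_singleton_eq_erase] at h1
  omega

theorem DD_even (U : Finset W) : ∃ e, DD G U = 2 * e := by
  induction U using Finset.induction_on with
  | empty => exact ⟨0, by simp [DD]⟩
  | insert a s h ih => obtain ⟨e, he⟩ := ih; exact ⟨e + dg G s a, by rw [DD_insert G h, he]; ring⟩

theorem DD_pair {x y : W} (h : x ≠ y) : DD G {x, y} = 2 * ad G x y := by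
  rw [DD_insert G (by simpa using h), DD_singleton, dg_singleton]; ring

theorem DD_triple {x y z : W} (h : x ≠ y) (h2 : x ≠ z) (h3 : y ≠ z) :
    DD G {x, y, z} = 2 * (ad G x y + ad G x z + ad G y z) := by
  rw [DD_insert G (by simp [h, h2]), DD_pair G h3, dg_insert G (by simpa using h3), dg_singleton]; ring

theorem DD_quad {x y z w : W} (h : x ≠ y) (h2 : x ≠ z) (h3 : y ≠ z) (h4 : x ≠ w) (h5 : y ≠ w)
    (h6 : z ≠ w) :
    DD G {x, y, z, w} = 2 * (ad G x y + ad G x z + ad G y z + ad G x w + ad G y w + ad G z w) := by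
  rw [DD_insert G (by simp [h, h2, h4]), DD_triple G h3 h5 h6, dg_insert G (by simp [h3, h5]),
    dg_insert G (by simpa using h6), dg_singleton]; ring

theorem DD_mono {S U : Finset W} (h : S ⊆ U) : DD G S ≤ DD G U := by
  rw [DD_eq_sum, DD_eq_sum]
  calc _ ≤ ∑ v ∈ S, ∑ w ∈ U, ad G v w :=
        Finset.sum_le_sum fun v _ => Finset.sum_le_sum_of_subset h
    _ ≤ _ := Finset.sum_le_sum_of_subset h

theorem dg_le {U : Finset W} {v : W} (hv : v ∈ U) : dg G U v + 1 ≤ U.card := by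
  have : (U.filter (fun w => G.Adj v w)) ⊆ U.erase v := by
    intro w hw; simp only [Finset.mem_filter, Finset.mem_erase] at hw ⊢
    exact ⟨fun e => by subst e; exact G.irrefl hw.2, hw.1⟩
  have := Finset.card_le_card this
  rw [Finset.card_erase_of_mem hv] at this
  have : 0 < U.card := Finset.card_pos.2 ⟨v, hv⟩
  unfold dg; omega

/-- the partition property -/
def PT (U : Finset W) (k b : ℕ) : Prop :=
  ∃ f : W → ℕ, (∀ v ∈ U, f v < k) ∧ (∀ i, DD G (U.filter (fun v => f v = i)) ≤ 2) ∧
    ∑ i ∈ Finset.range k, DD G (U.filter (fun v => f v = i)) ≤ 2 * b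

variable {G}

theorem PT.mono {U : Finset W} {k b c : ℕ} (h : PT G U k b) (hbc : b ≤ c) : PT G U k c := by
  obtain ⟨f, h1, h2, h3⟩ := h
  exact ⟨f, h1, h2, by omega⟩

theorem PT.insert {U : Finset W} {k b : ℕ} {v : W} (hv : v ∈ U) (hd : dg G U v < k)
    (h : PT G (U.erase v) k b) : PT G U k b := by
  obtain ⟨f, h1, h2, h3⟩ := h
  -- an index not used by neighbours
  obtain ⟨i, hi, hi2⟩ : ∃ i < k, ∀ w ∈ U, G.Adj v w → f w ≠ i := by
    by_contra! hc
    have hsub : Finset.range k ⊆ (U.filter (fun w => G.Adj v w)).image f := by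
      intro i hi
      obtain ⟨w, hw, ha, hf⟩ := hc i (Finset.mem_range.1 hi)
      exact Finset.mem_image.2 ⟨w, Finset.mem_filter.2 ⟨hw, ha⟩, hf⟩
    have := (Finset.card_le_card hsub).trans Finset.card_image_le
    rw [Finset.card_range] at this
    unfold dg at hd; omega
  have key : ∀ j, DD G (U.filter (fun w => (Function.update f v i) w = j)) =
      DD G ((U.erase v).filter (fun w => f w = j)) := by
    intro j
    by_cases hj : j = i
    · subst hj
      have hs : U.filter (fun w => (Function.update f v j) w = j) =
          Insert.insert v ((U.erase v).filter (fun w => f w = j)) := by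
        ext w
        by_cases hw : w = v
        · subst hw; simp [hv]
        · simp [hw]
      rw [hs, DD_insert G (by simp)]
      have : dg G ((U.erase v).filter (fun w => f w = j)) v = 0 := by
        unfold dg
        rw [Finset.card_eq_zero, Finset.filter_eq_empty_iff]
        intro w hw ha
        simp only [Finset.mem_filter, Finset.mem_erase] at hw
        exact hi2 w hw.1.2 ha hw.2
      rw [this, mul_zero, add_zero]
    · congr 1
      ext w
      by_cases hw : w = v
      · subst hw; simp [Ne.symm hj]
      · simp [hw]
  refine ⟨Function.update f v i, ?_, ?_, ?_⟩
  · intro w hw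
    by_cases hwv : w = v
    · subst hwv; simpa using hi
    · rw [Function.update_of_ne hwv]; exact h1 w (Finset.mem_erase.2 ⟨hwv, hw⟩)
  · intro j; rw [key]; exact h2 j
  · simp only [key]; exact h3

theorem PT.add {S U : Finset W} {k b c : ℕ} (hS : S ⊆ U) (hc : c ≤ 1) (hD : DD G S ≤ 2 * c)
    (h : PT G (U \ S) k b) : PT G U (k + 1) (b + c) := by
  obtain ⟨f, h1, h2, h3⟩ := h
  have e1 : U.filter (fun w => (if w ∈ S then k else f w) = k) = S := by
    ext w
    simp only [Finset.mem_filter]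
    constructor
    · rintro ⟨hw, h⟩
      by_contra hn
      rw [if_neg hn] at h
      have := h1 w (Finset.mem_sdiff.2 ⟨hw, hn⟩); omega
    · intro hw; exact ⟨hS hw, by rw [if_pos hw]⟩
  have e2 : ∀ j, j ≠ k → U.filter (fun w => (if w ∈ S then k else f w) = j) =
      (U \ S).filter (fun w => f w = j) := by
    intro j hj
    ext w
    by_cases hw : w ∈ S
    · simp [hw, Ne.symm hj]
    · simp [hw]
  refine ⟨fun w => if w ∈ S then k else f w, ?_, ?_, ?_⟩
  · intro v hv
    by_cases hvS : v ∈ S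
    · simp [hvS]
    · simp only [hvS, if_false]; have := h1 v (Finset.mem_sdiff.2 ⟨hv, hvS⟩); omega
  · intro i
    by_cases hi : i = k
    · subst hi; rw [e1]; omega
    · rw [e2 i hi]; exact h2 i
  · rw [Finset.sum_range_succ, e1]
    have : ∑ i ∈ Finset.range k, DD G (U.filter (fun w => (if w ∈ S then k else f w) = i)) =
        ∑ i ∈ Finset.range k, DD G ((U \ S).filter (fun w => f w = i)) :=
      Finset.sum_congr rfl fun i hi => by rw [e2 i (Finset.mem_range.1 hi).ne]
    beta_reduce
    omega

theorem PT_empty (k b : ℕ) : PT G (∅ : Finset W) k b :=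
  ⟨fun _ => 0, by simp, by simp [DD], by simp [DD]⟩

theorem PT_pairs (k : ℕ) : ∀ U : Finset W, U.card ≤ 2 * k → PT G U k (U.card - k) := by
  induction k with
  | zero => intro U h; have : U = ∅ := by simpa using h
            subst this; exact PT_empty _ _
  | succ k ih =>
    intro U h
    rcases U.eq_empty_or_nonempty with rfl | ⟨x, hx⟩
    · exact PT_empty _ _
    by_cases hc : U.card ≤ k + 1
    · have h1 : (U \ {x}).card = U.card - 1 := by
        rw [Finset.sdiff_singleton_eq_erase, Finset.card_erase_of_mem hx]
      have := PT.add (G := G) (S := {x}) (c := 0) (by simpa using hx) (by omega)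
        (by rw [DD_singleton]) (ih (U \ {x}) (by omega))
      exact this.mono (by omega)
    · obtain ⟨y, hy, hyx⟩ := Finset.exists_mem_ne (s := U) (by omega) x
      have hsub : ({x, y} : Finset W) ⊆ U := by
        intro z hz; simp at hz; rcases hz with rfl | rfl <;> assumption
      have h2 : ({x, y} : Finset W).card = 2 := Finset.card_pair hyx.symm
      have h1 : (U \ {x, y}).card = U.card - 2 := by
        rw [Finset.card_sdiff_of_subset hsub, h2]
      have := PT.add (G := G) (S := {x, y}) (c := 1) hsub (by omega)
        (by rw [DD_pair G hyx.symm]; have := ad_le G x y; omega) (ih (U \ {x, y}) (by omega))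
      exact this.mono (by omega)

theorem PT_family (C : Finset (Finset W)) : ∀ (U : Finset W) (k b : ℕ),
    (∀ S ∈ C, S ⊆ U ∧ DD G S ≤ 2) → (∀ S ∈ C, ∀ T ∈ C, S ≠ T → Disjoint S T) →
    PT G (U \ C.biUnion id) k b → PT G U (k + C.card) (b + C.card) := by
  induction C using Finset.induction_on with
  | empty => intro U k b _ _ h; simpa using h
  | insert S C hS ih =>
    intro U k b h1 h2 h3
    rw [Finset.card_insert_of_notMem hS]
    have h4 : U \ (insert S C).biUnion id = (U \ S) \ C.biUnion id := by
      rw [Finset.biUnion_insert, id, Finset.sdiff_union_distrib]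
      ext x; simp only [Finset.mem_inter, Finset.mem_sdiff]; tauto
    rw [h4] at h3
    have := ih (U \ S) k b (fun T hT => ⟨?_, (h1 T (Finset.mem_insert_of_mem hT)).2⟩)
      (fun A hA B hB => h2 A (Finset.mem_insert_of_mem hA) B (Finset.mem_insert_of_mem hB)) h3
    · exact PT.add (h1 S (Finset.mem_insert_self _ _)).1 (c := 1) le_rfl
        (by simpa using (h1 S (Finset.mem_insert_self _ _)).2) this
    · have hd := h2 T (Finset.mem_insert_of_mem hT) S (Finset.mem_insert_self _ _)
        (fun e => hS (e ▸ hT))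
      intro x hx
      exact Finset.mem_sdiff.2 ⟨(h1 T (Finset.mem_insert_of_mem hT)).1 hx,
        fun hxS => (Finset.disjoint_left.1 hd) hx hxS⟩

theorem card_family (C : Finset (Finset W)) (h3 : ∀ S ∈ C, S.card = 3)
    (h2 : ∀ S ∈ C, ∀ T ∈ C, S ≠ T → Disjoint S T) : (C.biUnion id).card = 3 * C.card := by
  rw [Finset.card_biUnion (t := id) (fun x hx y hy hxy => h2 x hx y hy hxy)]
  rw [Finset.sum_congr rfl (fun x hx => (h3 x hx : (id x).card = 3))]
  simp [mul_comm]

theorem dg_family (C : Finset (Finset W)) (h2 : ∀ S ∈ C, ∀ T ∈ C, S ≠ T → Disjoint S T) (v : W) :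
    dg G (C.biUnion id) v = ∑ S ∈ C, dg G S v := by
  simp only [dg_eq_sum]
  rw [Finset.sum_biUnion (t := id) (fun x hx y hy hxy => h2 x hx y hy hxy)]; rfl

theorem triples_exist {U : Finset W} {k b s : ℕ} (h : PT G U k b)
    (h3 : ∀ S ⊆ U, DD G S ≤ 2 → S.card ≤ 3) (hs : 2 * k + s ≤ U.card) :
    s ≤ k ∧ ∃ C : Finset (Finset W), C.card = s ∧ (∀ S ∈ C, S ⊆ U ∧ DD G S ≤ 2) ∧
      (∀ S ∈ C, S.card = 3) ∧ (∀ S ∈ C, ∀ T ∈ C, S ≠ T → Disjoint S T) := by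
  obtain ⟨f, h1, h2, -⟩ := h
  set F : ℕ → Finset W := fun i => U.filter (fun v => f v = i) with hF
  have hcard : U.card = ∑ i ∈ Finset.range k, (F i).card :=
    Finset.card_eq_sum_card_fiberwise (fun v hv => Finset.mem_coe.2 (Finset.mem_range.2 (h1 v hv)))
  set I := (Finset.range k).filter (fun i => (F i).card = 3) with hI
  have hle : ∑ i ∈ Finset.range k, (F i).card ≤ ∑ i ∈ Finset.range k, (2 + if (F i).card = 3 then 1 else 0) := by
    refine Finset.sum_le_sum fun i _ => ?_
    have := h3 (F i) (Finset.filter_subset _ _) (h2 i)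
    split_ifs <;> omega
  rw [Finset.sum_add_distrib, ← Finset.card_filter, Finset.sum_const, Finset.card_range, smul_eq_mul] at hle
  have hsI : s ≤ I.card := by rw [hI]; omega
  refine ⟨hsI.trans ((Finset.card_filter_le _ _).trans (by simp)), ?_⟩
  obtain ⟨J, hJ, hJs⟩ := Finset.exists_subset_card_eq hsI
  have hJ3 : ∀ i ∈ J, (F i).card = 3 := fun i hi => (Finset.mem_filter.1 (hJ hi)).2
  have hdis : ∀ i j, i ≠ j → Disjoint (F i) (F j) := by
    intro i j hij
    rw [Finset.disjoint_left]
    intro x hx hy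
    exact hij ((Finset.mem_filter.1 hx).2.symm.trans (Finset.mem_filter.1 hy).2)
  refine ⟨J.image F, ?_, ?_, ?_, ?_⟩
  · rw [Finset.card_image_of_injOn, hJs]
    intro i hi j hj hij
    by_contra hne
    have hd := hdis i j hne
    rw [hij, disjoint_self] at hd
    have := hJ3 j hj
    rw [hd] at this; simp at this
  · intro S hS
    obtain ⟨i, hi, rfl⟩ := Finset.mem_image.1 hS
    exact ⟨Finset.filter_subset _ _, h2 i⟩
  · intro S hS
    obtain ⟨i, hi, rfl⟩ := Finset.mem_image.1 hS
    exact hJ3 i hi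
  · intro S hS T hT hne
    obtain ⟨i, hi, rfl⟩ := Finset.mem_image.1 hS
    obtain ⟨j, hj, rfl⟩ := Finset.mem_image.1 hT
    exact hdis i j (fun e => hne (by rw [e]))

theorem exists_non {U X : Finset W} {v : W} (h : dg G U v + X.card < U.card) :
    ∃ y ∈ U, y ∉ X ∧ ad G v y = 0 := by
  by_contra! hc
  have : U ⊆ (U.filter (fun w => G.Adj v w)) ∪ X := by
    intro y hy
    by_cases hyX : y ∈ X
    · exact Finset.mem_union_right _ hyX
    · refine Finset.mem_union_left _ (Finset.mem_filter.2 ⟨hy, ?_⟩)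
      have := hc y hy hyX
      unfold ad at this
      by_contra hn; simp [hn] at this
  have := (Finset.card_le_card this).trans (Finset.card_union_le _ _)
  unfold dg at h; omega

theorem dg_ge_two {U : Finset W} {v x y : W} (hx : x ∈ U) (hy : y ∈ U) (hxy : x ≠ y) :
    ad G v x + ad G v y ≤ dg G U v := by
  have h : ({x, y} : Finset W) ⊆ U := by
    intro z hz; simp at hz; rcases hz with rfl | rfl <;> assumption
  have := dg_sdiff G h v
  rw [dg_insert G (by simpa using hxy), dg_singleton] at this
  omega

theorem common_union {U : Finset W} (h4 : ∀ S ⊆ U, DD G S ≤ 2 → S.card ≤ 3) {x y : W}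
    (hx : x ∈ U) (hy : y ∈ U) (hxy : x ≠ y) (ha : ad G x y = 0) :
    U.card ≤ 3 + (U.filter (fun w => G.Adj x w) ∪ U.filter (fun w => G.Adj y w)).card := by
  set N := U.filter (fun w => G.Adj x w) ∪ U.filter (fun w => G.Adj y w) with hN
  by_contra hc
  have h2 : 1 < (U \ ({x, y} ∪ N)).card := by
    have h1 := Finset.le_card_sdiff ({x, y} ∪ N) U
    have h3 := Finset.card_union_le {x, y} N
    have h5 : ({x, y} : Finset W).card = 2 := Finset.card_pair hxy
    omega
  obtain ⟨w, hw, w', hw', hne⟩ := Finset.one_lt_card.1 h2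
  simp only [hN, Finset.mem_sdiff, Finset.mem_union, Finset.mem_insert, Finset.mem_singleton,
    Finset.mem_filter, not_or, not_and] at hw hw'
  obtain ⟨hwU, ⟨hwx, hwy⟩, hw1, hw2⟩ := hw
  obtain ⟨hwU', ⟨hwx', hwy'⟩, hw1', hw2'⟩ := hw'
  have e1 : ad G x w = 0 := by simp [ad, hw1 hwU]
  have e2 : ad G y w = 0 := by simp [ad, hw2 hwU]
  have e3 : ad G x w' = 0 := by simp [ad, hw1' hwU']
  have e4 : ad G y w' = 0 := by simp [ad, hw2' hwU']
  have hD := DD_quad G hxy (Ne.symm hwx) (Ne.symm hwy) (Ne.symm hwx') (Ne.symm hwy') hne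
  have hle := ad_le G w w'
  have := h4 {x, y, w, w'} (by
    intro z hz; simp at hz; rcases hz with rfl | rfl | rfl | rfl <;> assumption) (by omega)
  rw [Finset.card_insert_of_notMem (by simp [hxy, Ne.symm hwx, Ne.symm hwx']),
    Finset.card_insert_of_notMem (by simp [Ne.symm hwy, Ne.symm hwy']),
    Finset.card_pair hne] at this
  omega

theorem common_non {U : Finset W} (h4 : ∀ S ⊆ U, DD G S ≤ 2 → S.card ≤ 3) {x y : W}
    (hx : x ∈ U) (hy : y ∈ U) (hxy : x ≠ y) (ha : ad G x y = 0) :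
    U.card ≤ 3 + dg G U x + dg G U y := by
  have h1 := common_union h4 hx hy hxy ha
  have h2 := Finset.card_union_le (U.filter (fun w => G.Adj x w)) (U.filter (fun w => G.Adj y w))
  unfold dg; omega

theorem common_non' {U : Finset W} (h4 : ∀ S ⊆ U, DD G S ≤ 2 → S.card ≤ 3) {x y c : W}
    (hx : x ∈ U) (hy : y ∈ U) (hxy : x ≠ y) (ha : ad G x y = 0) (hc : c ∈ U)
    (h1 : ad G x c = 1) (h2 : ad G y c = 1) :
    U.card ≤ 2 + dg G U x + dg G U y := by
  have h3 := common_union h4 hx hy hxy ha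
  have h5 := Finset.card_union_add_card_inter (U.filter (fun w => G.Adj x w))
    (U.filter (fun w => G.Adj y w))
  have h6 : 0 < (U.filter (fun w => G.Adj x w) ∩ U.filter (fun w => G.Adj y w)).card := by
    refine Finset.card_pos.2 ⟨c, ?_⟩
    have e1 : G.Adj x c := by by_contra hn; simp [ad, hn] at h1
    have e2 : G.Adj y c := by by_contra hn; simp [ad, hn] at h2
    simp [hc, e1, e2]
  unfold dg; omega

theorem mk6 {c c' c'' t t' t'' : W} {X : Finset W} (hn : [c, c', c'', t, t', t''].Nodup)
    (hX : ∀ v ∈ [c, c', c'', t, t', t''], v ∈ X)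
    (h1 : ad G c t + ad G c t' = 0) (h2 : ad G c' c'' + ad G c' t'' + ad G c'' t'' ≤ 1) :
    ∃ S1 S2 : Finset W, S1 ⊆ X ∧ S2 ⊆ X ∧ Disjoint S1 S2 ∧ S1.card = 3 ∧ S2.card = 3 ∧
      DD G S1 ≤ 2 ∧ DD G S2 ≤ 2 := by
  simp only [List.nodup_cons, List.mem_cons, not_or, List.not_mem_nil, not_false_eq_true] at hn hX
  refine ⟨{c, t, t'}, {c', c'', t''}, ?_, ?_, ?_, ?_, ?_, ?_, ?_⟩
  · intro v hv; apply hX; simp at hv; tauto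
  · intro v hv; apply hX; simp at hv; tauto
  · rw [Finset.disjoint_left]; intro v hv hv'; simp at hv hv'; grind
  · rw [Finset.card_eq_three]; exact ⟨c, t, t', by tauto, by tauto, by tauto, rfl⟩
  · rw [Finset.card_eq_three]; exact ⟨c', c'', t'', by tauto, by tauto, by tauto, rfl⟩
  · rw [DD_triple G (by tauto) (by tauto) (by tauto)]; have := ad_le G t t'; omega
  · rw [DD_triple G (by tauto) (by tauto) (by tauto)]; omega

theorem bool6 : ∀ xa xb xc ya yb yc za zb zc q : Bool,
    xa.toNat + xb.toNat + xc.toNat + ya.toNat + yb.toNat + yc.toNat + za.toNat + zb.toNat + zc.toNat ≤ 3 →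
    (xa || xb || ya || yb) → (xa || xc || ya || yc) → (xb || xc || yb || yc) →
    (za || zb || ya || yb) → (za || zc || ya || yc) → (zb || zc || yb || yc) →
    ((xa.toNat + xb.toNat = 0 ∧ 0 + yc.toNat + zc.toNat ≤ 1) ∨
    (xa.toNat + xc.toNat = 0 ∧ 0 + yb.toNat + zb.toNat ≤ 1) ∨
    (xb.toNat + xc.toNat = 0 ∧ 0 + ya.toNat + za.toNat ≤ 1) ∨
    (za.toNat + zb.toNat = 0 ∧ 0 + xc.toNat + yc.toNat ≤ 1) ∨
    (za.toNat + zc.toNat = 0 ∧ 0 + xb.toNat + yb.toNat ≤ 1) ∨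
    (zb.toNat + zc.toNat = 0 ∧ 0 + xa.toNat + ya.toNat ≤ 1) ∨
    (ya.toNat + yb.toNat = 0 ∧ q.toNat + xc.toNat + zc.toNat ≤ 1) ∨
    (ya.toNat + yc.toNat = 0 ∧ q.toNat + xb.toNat + zb.toNat ≤ 1) ∨
    (yb.toNat + yc.toNat = 0 ∧ q.toNat + xa.toNat + za.toNat ≤ 1)) := by
  decide +kernel

theorem ad_bool (x y : W) : ad G x y = (decide (G.Adj x y)).toNat := by
  unfold ad; by_cases h : G.Adj x y <;> simp [h]

theorem pm1 (x y z : W) : [x, z, y].Perm [x, y, z] := List.Perm.cons x (List.Perm.swap y z [])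
theorem pm2 (x y z : W) : [y, z, x].Perm [x, y, z] :=
  List.perm_append_comm (l₁ := [y, z]) (l₂ := [x])
theorem pm3 (x y z : W) : [z, x, y].Perm [x, y, z] :=
  List.perm_append_comm (l₁ := [z]) (l₂ := [x, y])
theorem pm4 (x y z : W) : [y, x, z].Perm [x, y, z] := List.Perm.swap x y [z]
theorem pmA {x y z a b c x' y' z' a' b' c' : W} (h : [x, y, z].Perm [x', y', z'])
    (h' : [a, b, c].Perm [a', b', c']) : [x, y, z, a, b, c].Perm [x', y', z', a', b', c'] :=
  List.Perm.append h h'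

theorem swap_aux {x y z a b c : W} {X : Finset W} (hn : [x, y, z, a, b, c].Nodup)
    (hX : ∀ v ∈ [x, y, z, a, b, c], v ∈ X)
    (h4 : ∀ S ⊆ X, DD G S ≤ 2 → S.card ≤ 3)
    (hxy : ad G x y = 0) (hyz : ad G y z = 0)
    (hs : ad G x a + ad G x b + ad G x c + ad G y a + ad G y b + ad G y c +
      ad G z a + ad G z b + ad G z c ≤ 3) :
    ∃ S1 S2 : Finset W, S1 ⊆ X ∧ S2 ⊆ X ∧ Disjoint S1 S2 ∧ S1.card = 3 ∧ S2.card = 3 ∧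
      DD G S1 ≤ 2 ∧ DD G S2 ≤ 2 := by
  have hn' := hn
  have hX' := hX
  simp only [List.nodup_cons, List.mem_cons, not_or, List.not_mem_nil, not_false_eq_true] at hn hX
  have quad : ∀ u v p q, u ∈ X → v ∈ X → p ∈ X → q ∈ X → u ≠ v → u ≠ p → u ≠ q → v ≠ p → v ≠ q →
      p ≠ q → ad G u v = 0 →
      (decide (G.Adj u p) || decide (G.Adj u q) || decide (G.Adj v p) || decide (G.Adj v q)) = true := by
    intro u v p q hu hv hp hq h1 h2 h3 h5 h6 h7 h0
    by_contra hc
    have e : ad G u p = 0 ∧ ad G u q = 0 ∧ ad G v p = 0 ∧ ad G v q = 0 := by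
      simp at hc; simp [ad, hc]
    have hD := DD_quad G h1 h2 h5 h3 h6 h7
    have hle := ad_le G p q
    have := h4 {u, v, p, q} (by
      intro z hz; simp at hz; rcases hz with rfl | rfl | rfl | rfl <;> assumption) (by omega)
    rw [Finset.card_insert_of_notMem (by simp [h1, h2, h3]),
      Finset.card_insert_of_notMem (by simp [h5, h6]),
      Finset.card_pair h7] at this
    omega
  have hzy : ad G z y = 0 := by rw [ad_comm]; exact hyz
  have hx := hX x (by simp)
  have hy := hX y (by simp)
  have hz := hX z (by simp)
  have ha := hX a (by simp)
  have hb := hX b (by simp)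
  have hc := hX c (by simp)
  have key := bool6 (decide (G.Adj x a)) (decide (G.Adj x b)) (decide (G.Adj x c))
    (decide (G.Adj y a)) (decide (G.Adj y b)) (decide (G.Adj y c))
    (decide (G.Adj z a)) (decide (G.Adj z b)) (decide (G.Adj z c)) (decide (G.Adj x z))
    (by simpa only [ad_bool] using hs)
    (quad x y a b hx hy ha hb (by tauto) (by tauto) (by tauto) (by tauto) (by tauto) (by tauto) hxy)
    (quad x y a c hx hy ha hc (by tauto) (by tauto) (by tauto) (by tauto) (by tauto) (by tauto) hxy)
    (quad x y b c hx hy hb hc (by tauto) (by tauto) (by tauto) (by tauto) (by tauto) (by tauto) hxy)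
    (quad z y a b hz hy ha hb (Ne.symm (by tauto)) (by tauto) (by tauto) (by tauto) (by tauto) (by tauto) hzy)
    (quad z y a c hz hy ha hc (Ne.symm (by tauto)) (by tauto) (by tauto) (by tauto) (by tauto) (by tauto) hzy)
    (quad z y b c hz hy hb hc (Ne.symm (by tauto)) (by tauto) (by tauto) (by tauto) (by tauto) (by tauto) hzy)
  simp only [← ad_bool] at key
  have nd : ∀ l : List W, l.Perm [x, y, z, a, b, c] → l.Nodup ∧ ∀ v ∈ l, v ∈ X := by
    intro l hl
    exact ⟨hl.nodup_iff.2 hn', fun v hv => hX' v (hl.mem_iff.1 hv)⟩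
  have fin : ∀ c1 c2 c3 t1 t2 t3 : W, [c1, c2, c3, t1, t2, t3].Perm [x, y, z, a, b, c] →
      ad G c1 t1 + ad G c1 t2 = 0 → ad G c2 c3 + ad G c2 t3 + ad G c3 t3 ≤ 1 →
      ∃ S1 S2 : Finset W, S1 ⊆ X ∧ S2 ⊆ X ∧ Disjoint S1 S2 ∧ S1.card = 3 ∧ S2.card = 3 ∧
      DD G S1 ≤ 2 ∧ DD G S2 ≤ 2 := by
    intro c1 c2 c3 t1 t2 t3 hp h1 h2
    exact mk6 (nd _ hp).1 (nd _ hp).2 h1 h2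
  rcases key with h | h | h | h | h | h | h | h | h
  · exact fin x y z a b c (pmA (List.Perm.refl _) (List.Perm.refl _)) h.1 (by omega)
  · exact fin x y z a c b (pmA (List.Perm.refl _) (pm1 _ _ _)) h.1 (by omega)
  · exact fin x y z b c a (pmA (List.Perm.refl _) (pm2 _ _ _)) h.1 (by omega)
  · exact fin z x y a b c (pmA (pm3 _ _ _) (List.Perm.refl _)) h.1 (by omega)
  · exact fin z x y a c b (pmA (pm3 _ _ _) (pm1 _ _ _)) h.1 (by omega)
  · exact fin z x y b c a (pmA (pm3 _ _ _) (pm2 _ _ _)) h.1 (by omega)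
  · exact fin y x z a b c (pmA (pm4 _ _ _) (List.Perm.refl _)) h.1 (by omega)
  · exact fin y x z a c b (pmA (pm4 _ _ _) (pm1 _ _ _)) h.1 (by omega)
  · exact fin y x z b c a (pmA (pm4 _ _ _) (pm2 _ _ _)) h.1 (by omega)

theorem path_form {C : Finset W} (h3 : C.card = 3) (hD : DD G C ≤ 2) :
    ∃ x y z, x ≠ y ∧ x ≠ z ∧ y ≠ z ∧ C = {x, y, z} ∧ ad G x y = 0 ∧ ad G y z = 0 := by
  obtain ⟨x, y, z, h1, h2, h4, rfl⟩ := Finset.card_eq_three.1 h3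
  rw [DD_triple G h1 h2 h4] at hD
  by_cases e1 : ad G x y = 0
  · by_cases e2 : ad G y z = 0
    · exact ⟨x, y, z, h1, h2, h4, rfl, e1, e2⟩
    · refine ⟨y, x, z, h1.symm, h4, h2, ?_, by rw [ad_comm]; exact e1, by omega⟩
      ext w; simp; tauto
  · refine ⟨x, z, y, h2, h1, h4.symm, ?_, by omega, by rw [ad_comm]; omega⟩
    ext w; simp; tauto

theorem swap {C T X : Finset W} (hC : C ⊆ X) (hT : T ⊆ X) (hC3 : C.card = 3) (hT3 : T.card = 3)
    (hd : Disjoint C T) (hDC : DD G C ≤ 2) (h4 : ∀ S ⊆ X, DD G S ≤ 2 → S.card ≤ 3)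
    (hs : ∑ v ∈ T, dg G C v ≤ 3) :
    ∃ S1 S2 : Finset W, S1 ⊆ C ∪ T ∧ S2 ⊆ C ∪ T ∧ Disjoint S1 S2 ∧ S1.card = 3 ∧ S2.card = 3 ∧
      DD G S1 ≤ 2 ∧ DD G S2 ≤ 2 := by
  obtain ⟨x, y, z, h1, h2, h3, rfl, hxy, hyz⟩ := path_form hC3 hDC
  obtain ⟨a, b, c, h5, h6, h7, rfl⟩ := Finset.card_eq_three.1 hT3
  rw [Finset.disjoint_left] at hd
  simp only [Finset.mem_insert, Finset.mem_singleton, not_or] at hd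
  have hx := hd (a := x) (by simp)
  have hy := hd (a := y) (by simp)
  have hz := hd (a := z) (by simp)
  refine swap_aux (x := x) (y := y) (z := z) (a := a) (b := b) (c := c) ?_ ?_ ?_ hxy hyz ?_
  · simp; tauto
  · intro v hv; simp at hv ⊢; tauto
  · intro S hS; exact h4 S (hS.trans (Finset.union_subset hC hT))
  · rw [cross_comm] at hs
    rw [Finset.sum_insert (by simp [h1, h2]), Finset.sum_pair h3] at hs
    rw [dg_insert G (by simp [h5, h6]), dg_insert G (by simp [h7]), dg_singleton,
      dg_insert G (by simp [h5, h6]), dg_insert G (by simp [h7]), dg_singleton,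
      dg_insert G (by simp [h5, h6]), dg_insert G (by simp [h7]), dg_singleton] at hs
    omega

theorem fam_sub {C : Finset (Finset W)} {U : Finset W} (h : ∀ S ∈ C, S ⊆ U ∧ DD G S ≤ 2) :
    C.biUnion id ⊆ U := by
  intro x hx
  simp only [Finset.mem_biUnion, id] at hx
  obtain ⟨S, hS, hx⟩ := hx
  exact (h S hS).1 hx

theorem fam_rest {C : Finset (Finset W)} {U : Finset W} (h : ∀ S ∈ C, S ⊆ U ∧ DD G S ≤ 2)
    (h3 : ∀ S ∈ C, S.card = 3) (h2 : ∀ S ∈ C, ∀ T ∈ C, S ≠ T → Disjoint S T) :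
    (U \ C.biUnion id).card + 3 * C.card = U.card := by
  rw [← card_family C h3 h2]
  exact Finset.card_sdiff_add_card_eq_card (fam_sub h)

theorem fam_erase_sub {C : Finset (Finset W)} {U C0 : Finset W}
    (h : ∀ S ∈ C, S ⊆ U ∧ DD G S ≤ 2)
    (h2 : ∀ S ∈ C, ∀ T ∈ C, S ≠ T → Disjoint S T) (h0 : C0 ∈ C) :
    C0 ∪ (U \ C.biUnion id) ⊆ U \ (C.erase C0).biUnion id := by
  intro x hx
  simp only [Finset.mem_union, Finset.mem_sdiff, Finset.mem_biUnion, id, not_exists, not_and,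
    Finset.mem_erase] at hx ⊢
  rcases hx with hx | hx
  · refine ⟨(h C0 h0).1 hx, fun S hS hxS => ?_⟩
    exact Finset.disjoint_left.1 (h2 S hS.2 C0 h0 hS.1) hxS hx
  · exact ⟨hx.1, fun S hS => hx.2 S hS.2⟩

theorem add_pairs {S U : Finset W} {k c : ℕ} (hS : S ⊆ U) (hc : c ≤ 1) (hD : DD G S ≤ 2 * c)
    (hk : U.card ≤ 2 * k + S.card) : PT G U (k + 1) (U.card - S.card - k + c) := by
  have h := Finset.card_sdiff_add_card_eq_card hS
  have h1 := PT_pairs (G := G) k (U \ S) (by omega)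
  have : (U \ S).card = U.card - S.card := by omega
  rw [this] at h1
  exact PT.add hS hc hD h1

/-- two sets plus pairs -/
theorem add_two {S1 S2 U : Finset W} {k c d : ℕ} (hS1 : S1 ⊆ U) (hS2 : S2 ⊆ U)
    (hdis : Disjoint S1 S2) (hc : c ≤ 1) (hD : DD G S1 ≤ 2 * c) (hd : d ≤ 1)
    (hD2 : DD G S2 ≤ 2 * d)
    (hk : U.card ≤ 2 * k + S1.card + S2.card) :
    PT G U (k + 2) (U.card - S1.card - S2.card - k + d + c) := by
  have h := Finset.card_sdiff_add_card_eq_card hS1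
  have h2 : S2 ⊆ U \ S1 := by
    intro x hx; rw [Finset.mem_sdiff]
    exact ⟨hS2 hx, fun h => Finset.disjoint_left.1 hdis h hx⟩
  have h1 := add_pairs (G := G) (k := k) h2 hd hD2 (by omega)
  have : (U \ S1).card = U.card - S1.card := by omega
  rw [this] at h1
  exact PT.add hS1 hc hD h1

theorem sub2 {U : Finset W} {x y : W} (hx : x ∈ U) (hy : y ∈ U) : ({x, y} : Finset W) ⊆ U := by
  intro z hz; simp at hz; rcases hz with rfl | rfl <;> assumption

theorem sub3 {U : Finset W} {x y z : W} (hx : x ∈ U) (hy : y ∈ U) (hz : z ∈ U) :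
    ({x, y, z} : Finset W) ⊆ U := by
  intro w hw; simp at hw; rcases hw with rfl | rfl | rfl <;> assumption

theorem card3 {x y z : W} (h : x ≠ y) (h2 : x ≠ z) (h3 : y ≠ z) :
    ({x, y, z} : Finset W).card = 3 := Finset.card_eq_three.2 ⟨x, y, z, h, h2, h3, rfl⟩

theorem sum3 {x y z : W} (h : x ≠ y) (h2 : x ≠ z) (h3 : y ≠ z) (f : W → ℕ) :
    ∑ v ∈ ({x, y, z} : Finset W), f v = f x + f y + f z := by
  rw [Finset.sum_insert (by simp [h, h2]), Finset.sum_pair h3]; ring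

section A
variable {U : Finset W} {k s : ℕ}

theorem A_pair (hF2 : ∀ S ⊆ U, DD G S ≤ 2 → 2 * ∑ v ∈ S, dg G U v + 6 ≤ DD G S + 8 * k)
    {x y : W} (hx : x ∈ U) (hy : y ∈ U) (h : x ≠ y) :
    dg G U x + dg G U y + 3 ≤ 4 * k + ad G x y := by
  have h1 := DD_pair G h
  have := ad_le G x y
  have := hF2 {x, y} (sub2 hx hy) (by omega)
  rw [Finset.sum_pair h] at this
  omega

theorem A_cherry (hF2 : ∀ S ⊆ U, DD G S ≤ 2 → 2 * ∑ v ∈ S, dg G U v + 6 ≤ DD G S + 8 * k)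
    {x y z : W} (hx : x ∈ U) (hy : y ∈ U) (hz : z ∈ U) (h : x ≠ y) (h2 : x ≠ z) (h3 : y ≠ z)
    (ha : ad G x y = 0) (hb : ad G y z = 0) :
    dg G U x + dg G U y + dg G U z + 2 ≤ 4 * k := by
  have h1 := DD_triple G h h2 h3
  have := ad_le G x z
  have := hF2 {x, y, z} (sub3 hx hy hz) (by omega)
  rw [sum3 h h2 h3] at this
  omega

theorem A_U1 (hF2 : ∀ S ⊆ U, DD G S ≤ 2 → 2 * ∑ v ∈ S, dg G U v + 6 ≤ DD G S + 8 * k)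
    (h4 : ∀ S ⊆ U, DD G S ≤ 2 → S.card ≤ 3) (hs : 1 ≤ s) (hN : U.card = 2 * k + s + 1)
    {z : W} (hz : z ∈ U) (hd : dg G U z + 1 < U.card) : dg G U z + s ≤ 2 * k := by
  obtain ⟨y, hy, hyz, hzy⟩ := exists_non (G := G) (U := U) (X := {z}) (v := z) (by simpa using hd)
  have hyz : y ≠ z := by simpa using hyz
  have hyz' : ad G y z = 0 := by rw [ad_comm]; exact hzy
  by_cases h1 : dg G U y + 2 < U.card
  · obtain ⟨x, hx, hx2, hyx⟩ := exists_non (G := G) (U := U) (X := {y, z}) (v := y)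
      (by rw [Finset.card_pair hyz]; exact h1)
    simp only [Finset.mem_insert, Finset.mem_singleton, not_or] at hx2
    have hxy : ad G x y = 0 := by rw [ad_comm]; exact hyx
    have a1 := A_cherry hF2 hx hy hz hx2.1 hx2.2 hyz hxy hyz'
    have a2 := common_non h4 hx hy hx2.1 hxy
    omega
  · by_cases h2 : dg G U z + 2 < U.card
    · obtain ⟨x, hx, hx2, hyx⟩ := exists_non (G := G) (U := U) (X := {y, z}) (v := z)
        (by rw [Finset.card_pair hyz]; exact h2)
      simp only [Finset.mem_insert, Finset.mem_singleton, not_or] at hx2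
      have hxy : ad G x z = 0 := by rw [ad_comm]; exact hyx
      have a1 := A_cherry hF2 hx hz hy hx2.2 hx2.1 hyz.symm hxy hzy
      have a2 := common_non h4 hx hz hx2.2 hxy
      omega
    · have := A_pair hF2 hy hz hyz
      omega

/-- the extremal case `s = k` -/
theorem A_sk (hF1 : ∀ v ∈ U, k ≤ dg G U v)
    (hF2 : ∀ S ⊆ U, DD G S ≤ 2 → 2 * ∑ v ∈ S, dg G U v + 6 ≤ DD G S + 8 * k)
    (h4 : ∀ S ⊆ U, DD G S ≤ 2 → S.card ≤ 3) (hs : 2 ≤ k) (hN : U.card = 2 * k + k + 1) : False := by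
  have hno : ∀ v ∈ U, dg G U v + 1 < U.card := by
    intro w hw
    by_contra hc
    obtain ⟨u, hu, huw⟩ := Finset.exists_mem_ne (s := U) (by omega) w
    have := A_pair hF2 hu hw huw
    have := ad_le G u w
    have := hF1 u hu
    omega
  have hd : ∀ v ∈ U, dg G U v = k := by
    intro v hv
    have := A_U1 hF2 h4 (by omega : 1 ≤ k) hN hv (hno v hv)
    have := hF1 v hv
    omega
  obtain ⟨v, hv⟩ : U.Nonempty := by rw [← Finset.card_pos]; omega
  obtain ⟨u, hu, huv, hvu⟩ := exists_non (G := G) (U := U) (X := {v}) (v := v)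
    (by simpa using hno v hv)
  have huv : u ≠ v := by simpa using huv
  have h1 := common_non h4 hv hu huv.symm hvu
  rw [hd v hv, hd u hu] at h1
  have hk : k = 2 := by omega
  subst hk
  -- u' nonadjacent to both
  have hcard : (U.filter (fun w => G.Adj v w) ∪ U.filter (fun w => G.Adj u w) ∪ {u, v}).card ≤ 6 := by
    refine (Finset.card_union_le _ _).trans ?_
    rw [Finset.card_pair huv]
    have := Finset.card_union_le (U.filter (fun w => G.Adj v w)) (U.filter (fun w => G.Adj u w))
    have e1 := hd v hv
    have e2 := hd u hu
    unfold dg at e1 e2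
    omega
  obtain ⟨t, ht, ht2⟩ := Finset.exists_mem_notMem_of_card_lt_card (t := U)
    (lt_of_le_of_lt hcard (by omega))
  simp only [Finset.mem_union, Finset.mem_filter, Finset.mem_insert, Finset.mem_singleton,
    not_or, not_and] at ht2
  have hvt : ad G v t = 0 := by unfold ad; simp [ht2.1.1 ht]
  have hut : ad G u t = 0 := by unfold ad; simp [ht2.1.2 ht]
  have htu := ht2.2.1
  have htv := ht2.2.2
  obtain ⟨x, hx⟩ : (U.filter (fun w => G.Adj v w)).Nonempty := by
    rw [← Finset.card_pos]; have := hd v hv; unfold dg at this; omega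
  rw [Finset.mem_filter] at hx
  have hvx : ad G v x = 1 := by unfold ad; simp [hx.2]
  have hux : ad G u x = 0 := by
    by_contra hc
    have := ad_le G u x
    have := common_non' h4 hv hu huv.symm hvu hx.1 hvx (by omega)
    rw [hd v hv, hd u hu] at this; omega
  have htx : ad G t x = 0 := by
    by_contra hc
    have := ad_le G t x
    have := common_non' h4 hv ht (Ne.symm htv) hvt hx.1 hvx (by omega)
    rw [hd v hv, hd t ht] at this; omega
  have hxv : v ≠ x := fun e => by rw [← e, ad_self] at hvx; omega
  have hxu : u ≠ x := fun e => by rw [← e] at hvx; omega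
  have hxt : t ≠ x := fun e => by rw [← e] at hvx; omega
  have hq := DD_quad G huv (Ne.symm htu) (Ne.symm htv) hxu hxv hxt
  have e3 : ad G u v = 0 := by rw [ad_comm]; exact hvu
  have := h4 {u, v, t, x} (by
    intro z hz; simp at hz; rcases hz with rfl | rfl | rfl | rfl <;> first | assumption | exact hx.1)
    (by omega)
  rw [Finset.card_insert_of_notMem (by simp [huv, Ne.symm htu, hxu]),
      Finset.card_insert_of_notMem (by simp [Ne.symm htv, hxv]),
      Finset.card_pair hxt] at this
  omega

end A

theorem PT.cast {U : Finset W} {k b k' b' : ℕ} (h : PT G U k b) (hk : k = k') (hb : b ≤ b') :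
    PT G U k' b' := by subst hk; exact h.mono hb

theorem exists_low (C : Finset (Finset W)) (h2 : ∀ S ∈ C, ∀ T ∈ C, S ≠ T → Disjoint S T)
    (T : Finset W) (q : ℕ) (h : ∑ v ∈ T, dg G (C.biUnion id) v < q * C.card) :
    ∃ C0 ∈ C, ∑ v ∈ T, dg G C0 v < q := by
  have e : ∑ v ∈ T, dg G (C.biUnion id) v = ∑ S ∈ C, ∑ v ∈ T, dg G S v := by
    rw [Finset.sum_comm]
    exact Finset.sum_congr rfl fun v _ => dg_family C h2 v
  rw [e] at h
  apply Finset.exists_lt_of_sum_lt (f := fun S => ∑ v ∈ T, dg G S v) (g := fun _ => q)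
  simpa [mul_comm] using h

theorem A_lt {U : Finset W} {k s : ℕ} (hF1 : ∀ v ∈ U, k ≤ dg G U v)
    (hF2 : ∀ S ⊆ U, DD G S ≤ 2 → 2 * ∑ v ∈ S, dg G U v + 6 ≤ DD G S + 8 * k)
    (h4 : ∀ S ⊆ U, DD G S ≤ 2 → S.card ≤ 3) (hs : 1 ≤ s) (hsk : s < k)
    (hN : U.card = 2 * k + s + 1) (C : Finset (Finset W)) (hC : C.card = s)
    (hCU : ∀ S ∈ C, S ⊆ U ∧ DD G S ≤ 2) (hC3 : ∀ S ∈ C, S.card = 3)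
    (hCd : ∀ S ∈ C, ∀ T ∈ C, S ≠ T → Disjoint S T) : PT G U k k := by
  by_contra hno
  obtain ⟨R, hRdef⟩ : ∃ R, R = U \ C.biUnion id := ⟨_, rfl⟩
  have hRU : R ⊆ U := by rw [hRdef]; exact Finset.sdiff_subset
  have hRc : R.card + 3 * s = U.card := by rw [hRdef, ← hC]; exact fam_rest hCU hC3 hCd
  have hT : ∀ T ⊆ R, T.card = 3 → 2 < DD G T := by
    intro T hT hT3
    by_contra hc
    have h1 := add_pairs (G := G) (k := k - s - 1) hT (le_refl 1) (by omega) (by omega)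
    rw [hRdef] at h1
    have h2 := PT_family C U _ _ hCU hCd h1
    rw [← hRdef] at h2
    exact hno (h2.cast (by omega) (by omega))
  have hT' : ∀ x ∈ R, ∀ y ∈ R, ∀ z ∈ R, x ≠ y → x ≠ z → y ≠ z →
      2 ≤ ad G x y + ad G x z + ad G y z := by
    intro x hx y hy z hz h1 h2 h3
    have := hT {x, y, z} (sub3 hx hy hz) (card3 h1 h2 h3)
    rw [DD_triple G h1 h2 h3] at this
    omega
  have hRd : ∀ r ∈ R, R.card ≤ dg G R r + 2 := by
    intro r hr
    by_contra hc
    obtain ⟨y, hy, hyr, hry⟩ := exists_non (G := G) (U := R) (X := {r}) (v := r)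
      (by rw [Finset.card_singleton]; omega)
    have hyr : y ≠ r := by simpa using hyr
    obtain ⟨x, hx, hx2, hyx⟩ := exists_non (G := G) (U := R) (X := {y, r}) (v := r)
        (by rw [Finset.card_pair hyr]; omega)
    simp only [Finset.mem_insert, Finset.mem_singleton, not_or] at hx2
    have := hT' r hr y hy x hx hyr.symm (Ne.symm hx2.2) (Ne.symm hx2.1)
    have := ad_le G y x
    omega
  have hbi : ∀ r, dg G (C.biUnion id) r + dg G R r = dg G U r := by
    intro r; rw [hRdef, add_comm]; exact dg_sdiff G (fam_sub hCU) r
  have key : ∃ T ⊆ R, T.card = 3 ∧ ∑ v ∈ T, dg G (C.biUnion id) v < 4 * s := by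
    by_cases hw : ∃ w ∈ U, dg G U w + 1 = U.card
    · obtain ⟨w, hw, hdw⟩ := hw
      have hu : ∀ u ∈ U, u ≠ w → dg G U u + s + 2 ≤ 2 * k := by
        intro u hu huw
        have := A_pair hF2 hu hw huw
        have := ad_le G u w
        omega
      obtain ⟨u, hu1, hu2⟩ := Finset.exists_mem_ne (s := U) (by omega) w
      have hu3 := hu u hu1 hu2
      have hu4 := hF1 u hu1
      have := Finset.pred_card_le_card_erase (s := R) (a := w)
      obtain ⟨T, hTR, hT3⟩ := Finset.exists_subset_card_eq (s := R.erase w) (n := 3) (by omega)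
      refine ⟨T, hTR.trans (Finset.erase_subset _ _), hT3, ?_⟩
      have : ∑ v ∈ T, dg G (C.biUnion id) v ≤ T.card • (s - 1) := by
        apply Finset.sum_le_card_nsmul
        intro v hv
        have h1 := Finset.mem_erase.1 (hTR hv)
        have h2 := hu v (hRU h1.2) h1.1
        have h3 := hRd v h1.2
        have h5 := hbi v
        omega
      rw [hT3] at this
      simp only [smul_eq_mul] at this
      omega
    · have hu : ∀ u ∈ U, dg G U u + s ≤ 2 * k := by
        intro u hu
        refine A_U1 hF2 h4 hs hN hu ?_
        have := dg_le G hu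
        by_contra hc
        exact hw ⟨u, hu, by omega⟩
      by_cases hcl : ∀ r ∈ R, dg G R r + 1 = R.card
      · obtain ⟨T, hTR, hT3⟩ := Finset.exists_subset_card_eq (s := R) (n := 3) (by omega)
        refine ⟨T, hTR, hT3, ?_⟩
        have : ∑ v ∈ T, dg G (C.biUnion id) v ≤ T.card • s := by
          apply Finset.sum_le_card_nsmul
          intro v hv
          have h2 := hu v (hRU (hTR hv))
          have h3 := hcl v (hTR hv)
          have h5 := hbi v
          omega
        rw [hT3] at this
        simp only [smul_eq_mul] at this
        omega
      · push Not at hcl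
        obtain ⟨r1, hr1, hd1⟩ := hcl
        have := dg_le G hr1
        obtain ⟨r2, hr2, h21, ha12⟩ := exists_non (G := G) (U := R) (X := {r1}) (v := r1)
          (by rw [Finset.card_singleton]; omega)
        have h21 : r2 ≠ r1 := by simpa using h21
        have hc2 := Finset.card_pair h21
        obtain ⟨r3, hr3, h3⟩ := Finset.exists_mem_notMem_of_card_lt_card (s := {r2, r1}) (t := R)
          (by omega)
        simp only [Finset.mem_insert, Finset.mem_singleton, not_or] at h3
        have hu1 := hu r1 (hRU hr1)
        obtain ⟨z, hz, hz2, haz⟩ := exists_non (G := G) (U := U) (X := {r2, r1}) (v := r1)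
          (by omega)
        simp only [Finset.mem_insert, Finset.mem_singleton, not_or] at hz2
        have hch := A_cherry hF2 (hRU hr2) (hRU hr1) hz h21 (Ne.symm hz2.1) (Ne.symm hz2.2)
          (by rw [ad_comm]; exact ha12) haz
        have hFz := hF1 z hz
        refine ⟨{r1, r2, r3}, sub3 hr1 hr2 hr3, card3 h21.symm (Ne.symm h3.2) (Ne.symm h3.1), ?_⟩
        rw [sum3 h21.symm (Ne.symm h3.2) (Ne.symm h3.1)]
        have ht := hT' r1 hr1 r2 hr2 r3 hr3 h21.symm (Ne.symm h3.2) (Ne.symm h3.1)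
        have hge := dg_ge_two (G := G) (v := r3) hr1 hr2 h21.symm
        rw [ad_comm G r3 r1, ad_comm G r3 r2] at hge
        have b1 := hbi r1
        have b2 := hbi r2
        have b3 := hbi r3
        have c1 := hRd r1 hr1
        have c2 := hRd r2 hr2
        have c3 := hRd r3 hr3
        have hu3 := hu r3 (hRU hr3)
        omega
  obtain ⟨T, hTR, hT3, hlt⟩ := key
  rw [← hC] at hlt
  obtain ⟨C0, hC0, hlow⟩ := exists_low C hCd T 4 hlt
  have hdis : Disjoint C0 T := by
    rw [Finset.disjoint_left]
    intro x hx hxT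
    have := hTR hxT
    rw [hRdef, Finset.mem_sdiff] at this
    exact this.2 (Finset.mem_biUnion.2 ⟨C0, hC0, hx⟩)
  obtain ⟨S1, S2, hS1, hS2, hS12, h31, h32, hD1, hD2⟩ := swap (hCU C0 hC0).1 (hTR.trans hRU)
    (hC3 C0 hC0) hT3 hdis (hCU C0 hC0).2 h4 (by omega)
  have hsub : C0 ∪ T ⊆ U \ (C.erase C0).biUnion id := by
    refine Finset.Subset.trans ?_ (fam_erase_sub hCU hCd hC0)
    rw [← hRdef]
    exact Finset.union_subset_union_right hTR
  have e1 : ∀ S ∈ C.erase C0, S ⊆ U ∧ DD G S ≤ 2 := fun S hS => hCU S (Finset.mem_of_mem_erase hS)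
  have e2 : ∀ S ∈ C.erase C0, ∀ T ∈ C.erase C0, S ≠ T → Disjoint S T := fun S hS T hT =>
    hCd S (Finset.mem_of_mem_erase hS) T (Finset.mem_of_mem_erase hT)
  have hr := fam_rest e1 (fun S hS => hC3 S (Finset.mem_of_mem_erase hS)) e2
  have hce := Finset.card_erase_of_mem hC0
  have h1 := add_two (G := G) (k := k - s - 1) (hS1.trans hsub) (hS2.trans hsub) hS12 (le_refl 1)
    (by omega) (le_refl 1) (by omega) (by omega)
  have h2 := PT_family _ U _ _ e1 e2 h1
  exact hno (h2.cast (by omega) (by omega))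

theorem A_res {U : Finset W} {j : ℕ} (hj : 1 ≤ j)
    (IHk : ∀ U' : Finset W, DD G U' < 4 * j ^ 2 → PT G U' j j)
    (IHU : ∀ v ∈ U, PT G (U.erase v) (j + 1) (j + 1)) (hD : DD G U < 4 * (j + 1) ^ 2) :
    PT G U (j + 1) (j + 1) := by
  by_contra hno
  obtain ⟨k, hk⟩ : ∃ k, k = j + 1 := ⟨_, rfl⟩
  have hF1 : ∀ v ∈ U, k ≤ dg G U v := by
    intro v hv
    by_contra hc
    exact hno (PT.insert hv (by omega) (IHU v hv))
  have hF2 : ∀ S ⊆ U, DD G S ≤ 2 → 2 * ∑ v ∈ S, dg G U v + 6 ≤ DD G S + 8 * k := by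
    intro S hS hSD
    by_contra hc
    have h1 := DD_sdiff G hS
    obtain ⟨a, ha⟩ := DD_even G U
    obtain ⟨b, hb⟩ := DD_even G S
    have h2 : DD G (U \ S) < 4 * j ^ 2 := by
      have : 4 * (j + 1) ^ 2 = 4 * j ^ 2 + 8 * j + 4 := by ring
      omega
    exact hno (PT.add hS (le_refl 1) (by omega) (IHk _ h2))
  have h4 : ∀ S ⊆ U, DD G S ≤ 2 → S.card ≤ 3 := by
    intro S hS hSD
    by_contra hc
    have h1 := hF2 S hS hSD
    have h2 : S.card • k ≤ ∑ v ∈ S, dg G U v :=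
      Finset.card_nsmul_le_sum _ _ _ fun v hv => hF1 v (hS hv)
    simp only [smul_eq_mul] at h2
    have : 4 * k ≤ S.card * k := Nat.mul_le_mul_right _ (by omega)
    omega
  rw [← hk] at hno hD IHU
  by_cases hN0 : U.card ≤ 2 * k
  · exact hno ((PT_pairs k U hN0).mono (by omega))
  by_cases hN1 : U.card = 2 * k + 1
  · by_cases h3 : ∃ T ⊆ U, T.card = 3 ∧ DD G T ≤ 2
    · obtain ⟨T, hT, hT3, hTD⟩ := h3
      have h1 := add_pairs (G := G) (k := j) hT (le_refl 1) (by omega) (by omega)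
      exact hno (h1.cast (by omega) (by omega))
    · have hd : ∀ v ∈ U, 2 * k - 1 ≤ dg G U v := by
        intro r hr
        by_contra hc
        obtain ⟨y, hy, hyr, hry⟩ := exists_non (G := G) (U := U) (X := {r}) (v := r)
          (by rw [Finset.card_singleton]; omega)
        have hyr : y ≠ r := by simpa using hyr
        obtain ⟨x, hx, hx2, hyx⟩ := exists_non (G := G) (U := U) (X := {y, r}) (v := r)
            (by rw [Finset.card_pair hyr]; omega)
        simp only [Finset.mem_insert, Finset.mem_singleton, not_or] at hx2
        have h5 := DD_triple G hyr.symm (Ne.symm hx2.2) (Ne.symm hx2.1)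
        have := ad_le G y x
        exact h3 ⟨{r, y, x}, sub3 hr hy hx, card3 hyr.symm (Ne.symm hx2.2) (Ne.symm hx2.1), by omega⟩
      have h2 : U.card • (2 * k - 1) ≤ DD G U := Finset.card_nsmul_le_sum _ _ _ hd
      obtain ⟨a, ha⟩ := DD_even G U
      rw [hN1, smul_eq_mul] at h2
      have e : (2 * k + 1) * (2 * k - 1) + 1 = 4 * k ^ 2 := by
        rw [hk, show 2 * (j + 1) - 1 = 2 * j + 1 by omega]; ring
      omega
  obtain ⟨s, hs⟩ : ∃ s, U.card = 2 * k + s + 1 := ⟨U.card - 2 * k - 1, by omega⟩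
  obtain ⟨v, hv⟩ : U.Nonempty := by rw [← Finset.card_pos]; omega
  have hsub := Finset.erase_subset v U
  obtain ⟨hsk, C, hC, hCU, hC3, hCd⟩ := triples_exist (s := s) (IHU v hv)
    (fun S hS => h4 S (hS.trans hsub)) (by rw [Finset.card_erase_of_mem hv]; omega)
  rcases Nat.lt_or_ge s k with h | h
  · exact hno (A_lt hF1 hF2 h4 (by omega) h hs C hC
      (fun S hS => ⟨(hCU S hS).1.trans hsub, (hCU S hS).2⟩) hC3 hCd)
  · have : s = k := by omega
    subst this
    exact A_sk hF1 hF2 h4 (by omega) hs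

theorem PT_one {U : Finset W} {b : ℕ} (h : DD G U ≤ 2) (hb : DD G U ≤ 2 * b) : PT G U 1 b := by
  have h0 : ∀ c, DD G U ≤ 2 * c → c ≤ 1 → PT G U 1 c := by
    intro c hc hc1
    have := PT.add (G := G) (U := U) (S := U) (k := 0) (b := 0) (Finset.Subset.refl U) hc1 hc
      (by rw [Finset.sdiff_self]; exact PT_empty _ _)
    exact this.cast (by omega) (by omega)
  obtain ⟨a, ha⟩ := DD_even G U
  exact (h0 a (by omega) (by omega)).mono (by omega)

theorem A_main (k : ℕ) : ∀ U : Finset W, DD G U < 4 * k ^ 2 → PT G U k k := by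
  induction k with
  | zero => intro U h; simp at h
  | succ j ih =>
    intro U
    induction U using Finset.strongInduction with
    | H U ihU =>
      intro h
      rcases Nat.eq_zero_or_pos j with rfl | hj
      · obtain ⟨a, ha⟩ := DD_even G U
        exact PT_one (by omega) (by omega)
      · refine A_res hj ih (fun v hv => ihU _ (Finset.erase_ssubset hv) ?_) h
        exact lt_of_le_of_lt (DD_mono G (Finset.erase_subset v U)) h

theorem pair_triple_aux {X : Finset W} {x y z r r' : W} (hx : x ∈ X) (hy : y ∈ X) (hz : z ∈ X)
    (hr : r ∈ X) (hr' : r' ∈ X) (h1 : x ≠ y) (h2 : x ≠ z) (h3 : y ≠ z) (h4 : r ≠ x) (h5 : r ≠ y)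
    (h6 : r ≠ z) (h7 : r' ≠ x) (h8 : r' ≠ y) (h9 : r' ≠ z) (h10 : r ≠ r')
    (hxy : ad G x y = 0) (hyz : ad G y z = 0)
    (hind : ∀ a ∈ X, ∀ b ∈ X, ∀ c ∈ X, a ≠ b → a ≠ c → b ≠ c → 1 ≤ ad G a b + ad G a c + ad G b c)
    (hs1 : ad G r x + ad G r y + ad G r z ≤ 1)
    (hs : ad G r x + ad G r y + ad G r z + ad G r' x + ad G r' y + ad G r' z ≤ 3) :
    ∃ S1 S2 : Finset W, S1 ⊆ X ∧ S2 ⊆ X ∧ Disjoint S1 S2 ∧ S1.card = 2 ∧ S2.card = 3 ∧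
      DD G S1 ≤ 0 ∧ DD G S2 ≤ 2 := by
  have a1 := hind r hr x hx y hy h4 h5 h1
  have a2 := hind r hr y hy z hz h5 h6 h3
  have a3 := hind r hr x hx z hz h4 h6 h2
  have l1 := ad_le G x z
  have c1 := ad_comm G x y
  by_cases e1 : ad G r' x = 0
  · refine ⟨{r', x}, {r, y, z}, sub2 hr' hx, sub3 hr hy hz, ?_, Finset.card_pair h7, card3 h5 h6 h3, ?_, ?_⟩
    · simp [*, Ne.symm]
    · rw [DD_pair G h7]; omega
    · rw [DD_triple G h5 h6 h3]; omega
  by_cases e2 : ad G r' z = 0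
  · refine ⟨{r', z}, {r, y, x}, sub2 hr' hz, sub3 hr hy hx, ?_, Finset.card_pair h9, card3 h5 h4 h1.symm, ?_, ?_⟩
    · simp [*, Ne.symm]
    · rw [DD_pair G h9]; omega
    · rw [DD_triple G h5 h4 h1.symm]; omega
  · refine ⟨{r', y}, {r, x, z}, sub2 hr' hy, sub3 hr hx hz, ?_, Finset.card_pair h8, card3 h4 h6 h2, ?_, ?_⟩
    · simp [*, Ne.symm]
    · rw [DD_pair G h8]; omega
    · rw [DD_triple G h4 h6 h2]; omega

theorem B_res {U : Finset W} {j : ℕ} (hj : 1 ≤ j)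
    (IHB : ∀ U' : Finset W, DD G U' < (2 * j - 1) * (2 * j) → PT G U' j (j - 1))
    (IHU : ∀ v ∈ U, PT G (U.erase v) (j + 1) j) (hD : DD G U < (2 * j + 1) * (2 * j + 2)) :
    PT G U (j + 1) j := by
  by_contra hno
  obtain ⟨k, hk⟩ : ∃ k, k = j + 1 := ⟨_, rfl⟩
  have hF1 : ∀ v ∈ U, k ≤ dg G U v := by
    intro v hv
    by_contra hc
    exact hno (PT.insert hv (by omega) (IHU v hv))
  have e1 : (2 * j + 1) * (2 * j + 2) = 4 * j ^ 2 + 6 * j + 2 := by ring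
  have e2 : (2 * j - 1) * (2 * j) + 2 * j = 4 * j ^ 2 := by
    obtain ⟨i, rfl⟩ : ∃ i, j = i + 1 := ⟨j - 1, by omega⟩
    rw [show 2 * (i + 1) - 1 = 2 * i + 1 by omega]; ring
  have e3 : 4 * k ^ 2 = 4 * j ^ 2 + 8 * j + 4 := by rw [hk]; ring
  obtain ⟨aU, haU⟩ := DD_even G U
  have hI : ∀ S ⊆ U, DD G S = 0 → ∑ v ∈ S, dg G U v + 3 ≤ 3 * k := by
    intro S hS hSD
    by_contra hc
    have h1 := DD_sdiff G hS
    have h2 : DD G (U \ S) < 4 * j ^ 2 := by omega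
    exact hno (PT.add hS (Nat.zero_le 1) (by omega) (A_main j _ h2))
  have hE : ∀ S ⊆ U, DD G S = 2 → ∑ v ∈ S, dg G U v + 3 ≤ 4 * k := by
    intro S hS hSD
    by_contra hc
    have h1 := DD_sdiff G hS
    have h2 : DD G (U \ S) < (2 * j - 1) * (2 * j) := by omega
    exact hno ((PT.add hS (le_refl 1) (by omega) (IHB _ h2)).cast rfl (by omega))
  have hge : ∀ S ⊆ U, S.card * k ≤ ∑ v ∈ S, dg G U v := fun S hS =>
    Finset.card_nsmul_le_sum _ _ _ fun v hv => hF1 v (hS hv)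
  have h4 : ∀ S ⊆ U, DD G S ≤ 2 → S.card ≤ 3 := by
    intro S hS hSD
    by_contra hc
    have h2 := hge S hS
    obtain ⟨a, ha⟩ := DD_even G S
    have h3 : 4 * k ≤ S.card * k := Nat.mul_le_mul_right _ (by omega)
    rcases Nat.eq_zero_or_pos a with h | h
    · have := hI S hS (by omega)
      omega
    · have := hE S hS (by omega)
      omega
  have hind : ∀ a ∈ U, ∀ b ∈ U, ∀ c ∈ U, a ≠ b → a ≠ c → b ≠ c →
      1 ≤ ad G a b + ad G a c + ad G b c := by
    intro a ha b hb c hc h1 h2 h3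
    by_contra hcon
    have h5 := DD_triple G h1 h2 h3
    have h6 := hI _ (sub3 ha hb hc) (by omega)
    have h7 := hge _ (sub3 ha hb hc)
    rw [card3 h1 h2 h3] at h7
    omega
  have hIp : ∀ a ∈ U, ∀ b ∈ U, a ≠ b → ad G a b = 0 → dg G U a + dg G U b + 3 ≤ 3 * k := by
    intro a ha b hb h1 h2
    have h5 := DD_pair G h1
    have h6 := hI _ (sub2 ha hb) (by omega)
    rw [Finset.sum_pair h1] at h6
    exact h6
  by_cases hN0 : U.card < 2 * k
  · exact hno ((PT_pairs k U (by omega)).cast hk (by omega))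
  -- a nonadjacent pair
  obtain ⟨a, ha, hda⟩ : ∃ a ∈ U, dg G U a + 1 < U.card := by
    by_contra! hc
    have h2 : U.card • (2 * k - 1) ≤ DD G U := Finset.card_nsmul_le_sum _ _ _ fun v hv => by
      have := hc v hv; show _ ≤ dg G U v; omega
    rw [smul_eq_mul] at h2
    have h3 : (2 * k) * (2 * k - 1) ≤ U.card * (2 * k - 1) := Nat.mul_le_mul_right _ (by omega)
    have h5 : (2 * k) * (2 * k - 1) = (2 * j + 1) * (2 * j + 2) := by
      rw [hk, show 2 * (j + 1) - 1 = 2 * j + 1 by omega]; ring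
    omega
  obtain ⟨c, hc, hca, hac⟩ := exists_non (G := G) (U := U) (X := {a}) (v := a)
    (by rw [Finset.card_singleton]; omega)
  have hca : c ≠ a := by simpa using hca
  have hdac := hIp a ha c hc hca.symm hac
  by_cases hN1 : U.card = 2 * k
  · have h5 := DD_pair G hca.symm
    have hcp := Finset.card_pair hca.symm
    have h1 := add_pairs (G := G) (k := j) (sub2 ha hc) (Nat.zero_le 1) (by omega) (by omega)
    exact hno (h1.cast rfl (by omega))
  obtain ⟨t, ht⟩ : ∃ t, U.card = 2 * k + t := ⟨U.card - 2 * k, by omega⟩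
  have hN2 : U.card ≤ 2 + dg G U a + dg G U c := by
    by_contra hcon
    have hcard : (U.filter (fun w => G.Adj a w) ∪ U.filter (fun w => G.Adj c w) ∪ {a, c}).card
        < U.card := by
      refine (Finset.card_union_le _ _).trans_lt ?_
      rw [Finset.card_pair hca.symm]
      have := Finset.card_union_le (U.filter (fun w => G.Adj a w)) (U.filter (fun w => G.Adj c w))
      unfold dg at hcon
      omega
    obtain ⟨v, hv, hv2⟩ := Finset.exists_mem_notMem_of_card_lt_card hcard
    simp only [Finset.mem_union, Finset.mem_filter, Finset.mem_insert, Finset.mem_singleton,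
      not_or, not_and] at hv2
    have hvt : ad G a v = 0 := by unfold ad; simp [hv2.1.1 hv]
    have hut : ad G c v = 0 := by unfold ad; simp [hv2.1.2 hv]
    have := hind a ha c hc v hv hca.symm (Ne.symm hv2.2.1) (Ne.symm hv2.2.2)
    omega
  have htk : t < k := by omega
  obtain ⟨-, C, hC, hCU, hC3, hCd⟩ := triples_exist (s := t) (A_main k U (by omega)) h4 (by omega)
  obtain ⟨R, hRdef⟩ : ∃ R, R = U \ C.biUnion id := ⟨_, rfl⟩
  have hRU : R ⊆ U := by rw [hRdef]; exact Finset.sdiff_subset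
  have hRc : R.card + 3 * t = U.card := by rw [hRdef, ← hC]; exact fam_rest hCU hC3 hCd
  have hbi : ∀ r, dg G (C.biUnion id) r + dg G R r = dg G U r := by
    intro r; rw [hRdef, add_comm]; exact dg_sdiff G (fam_sub hCU) r
  have hRcl : ∀ r ∈ R, R.card ≤ dg G R r + 1 := by
    intro r hr
    by_contra hcon
    obtain ⟨y, hy, hyr, hry⟩ := exists_non (G := G) (U := R) (X := {r}) (v := r)
      (by rw [Finset.card_singleton]; omega)
    have hyr : y ≠ r := by simpa using hyr
    have h5 := DD_pair G hyr.symm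
    have hcp := Finset.card_pair hyr.symm
    have h1 := add_pairs (G := G) (k := k - t - 1) (sub2 hr hy) (Nat.zero_le 1) (by omega) (by omega)
    rw [hRdef] at h1
    have h2 := PT_family C U _ _ hCU hCd h1
    rw [← hRdef] at h2
    exact hno (h2.cast (by omega) (by omega))
  obtain ⟨r1, hr1⟩ : R.Nonempty := by rw [← Finset.card_pos]; omega
  obtain ⟨r2, hr2, h21⟩ := Finset.exists_mem_ne (s := R) (by omega) r1
  have hout : ∀ r ∈ R, ∀ S ∈ C, ∀ x ∈ S, r ≠ x := by
    intro r hr S hS x hx e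
    rw [hRdef, Finset.mem_sdiff] at hr
    exact hr.2 (Finset.mem_biUnion.2 ⟨S, hS, by rw [e]; exact hx⟩)
  have hnu : ∀ r ∈ R, ∀ r' ∈ R, r ≠ r' → dg G U r + 1 < U.card := by
    intro r hr r' hr' hne
    by_contra hcon
    have had : ad G r r' = 1 := by
      by_contra h0
      have := ad_le G r r'
      have q1 := dg_sdiff G (S := {r'}) (U := U) (by simpa using hRU hr') r
      rw [dg_singleton, Finset.sdiff_singleton_eq_erase] at q1
      have q2 := dg_le G (U := U.erase r') (v := r) (Finset.mem_erase.2 ⟨hne, hRU hr⟩)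
      rw [Finset.card_erase_of_mem (hRU hr')] at q2
      omega
    have h5 := DD_pair G hne
    have h6 := hE _ (sub2 (hRU hr) (hRU hr')) (by omega)
    rw [Finset.sum_pair hne] at h6
    have h7 := hbi r'
    have h8 := hRcl r' hr'
    obtain ⟨C0, hC0, hlow⟩ := exists_low (G := G) C hCd {r'} 1 (by
      rw [Finset.sum_singleton]; omega)
    rw [Finset.sum_singleton] at hlow
    obtain ⟨x, y, z, g1, g2, g3, rfl, hxy, hyz⟩ := path_form (hC3 C0 hC0) (hCU C0 hC0).2
    have hsubU := (hCU _ hC0).1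
    have g4 := dg_ge_two (G := G) (v := r') (U := {x, y, z}) (x := x) (y := y) (by simp) (by simp) g1
    have := hind r' (hRU hr') x (hsubU (by simp)) y (hsubU (by simp))
      (hout r' hr' _ hC0 x (by simp)) (hout r' hr' _ hC0 y (by simp)) g1
    omega
  have hlowdeg : ∀ r ∈ R, dg G U r + 1 < U.card → dg G (C.biUnion id) r + 2 ≤ 2 * t := by
    intro r hr hd
    obtain ⟨y, hy, hyr, hry⟩ := exists_non (G := G) (U := U) (X := {r}) (v := r)
      (by rw [Finset.card_singleton]; omega)
    have hyr : y ≠ r := by simpa using hyr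
    have h1 := hIp r (hRU hr) y hy hyr.symm hry
    have h2 := hF1 y hy
    have h7 := hbi r
    have h8 := hRcl r hr
    omega
  have g1 := hlowdeg r1 hr1 (hnu r1 hr1 r2 hr2 h21.symm)
  have g2 := hlowdeg r2 hr2 (hnu r2 hr2 r1 hr1 h21)
  obtain ⟨C0, hC0, hlow⟩ := exists_low (G := G) C hCd {r1, r2} 4 (by
      rw [Finset.sum_pair h21.symm]; omega)
  rw [Finset.sum_pair h21.symm] at hlow
  have hsubR : C0 ∪ R ⊆ U \ (C.erase C0).biUnion id := by
    rw [hRdef]; exact fam_erase_sub hCU hCd hC0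
  have key : ∃ S1 S2 : Finset W, S1 ⊆ C0 ∪ R ∧ S2 ⊆ C0 ∪ R ∧ Disjoint S1 S2 ∧ S1.card = 2 ∧
      S2.card = 3 ∧ DD G S1 ≤ 0 ∧ DD G S2 ≤ 2 := by
    have hsubU : C0 ∪ R ⊆ U := hsubR.trans Finset.sdiff_subset
    obtain ⟨x, y, z, g1, g2, g3, hCe, hxy, hyz⟩ := path_form (hC3 C0 hC0) (hCU C0 hC0).2
    have hind' : ∀ a ∈ C0 ∪ R, ∀ b ∈ C0 ∪ R, ∀ c ∈ C0 ∪ R, a ≠ b → a ≠ c → b ≠ c →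
      1 ≤ ad G a b + ad G a c + ad G b c := fun a ha b hb c hc =>
        hind a (hsubU ha) b (hsubU hb) c (hsubU hc)
    have mx : x ∈ C0 := by rw [hCe]; simp
    have my : y ∈ C0 := by rw [hCe]; simp
    have mz : z ∈ C0 := by rw [hCe]; simp
    have hdg : ∀ r, dg G C0 r = ad G r x + ad G r y + ad G r z := by
      intro r
      rw [hCe, dg_insert G (by simp [g1, g2]), dg_insert G (by simpa using g3), dg_singleton]; ring
    have d1 := hdg r1
    have d2 := hdg r2
    by_cases hcase : ad G r1 x + ad G r1 y + ad G r1 z ≤ 1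
    · exact pair_triple_aux (Finset.mem_union_left _ mx) (Finset.mem_union_left _ my)
        (Finset.mem_union_left _ mz) (Finset.mem_union_right _ hr1) (Finset.mem_union_right _ hr2)
        g1 g2 g3 (hout r1 hr1 _ hC0 x mx) (hout r1 hr1 _ hC0 y my) (hout r1 hr1 _ hC0 z mz)
        (hout r2 hr2 _ hC0 x mx) (hout r2 hr2 _ hC0 y my) (hout r2 hr2 _ hC0 z mz) h21.symm
        hxy hyz hind' hcase (by omega)
    · exact pair_triple_aux (Finset.mem_union_left _ mx) (Finset.mem_union_left _ my)
        (Finset.mem_union_left _ mz) (Finset.mem_union_right _ hr2) (Finset.mem_union_right _ hr1)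
        g1 g2 g3 (hout r2 hr2 _ hC0 x mx) (hout r2 hr2 _ hC0 y my) (hout r2 hr2 _ hC0 z mz)
        (hout r1 hr1 _ hC0 x mx) (hout r1 hr1 _ hC0 y my) (hout r1 hr1 _ hC0 z mz) h21
        hxy hyz hind' (by omega) (by omega)
  obtain ⟨S1, S2, hS1, hS2, hS12, h31, h32, hD1, hD2⟩ := key
  have e1 : ∀ S ∈ C.erase C0, S ⊆ U ∧ DD G S ≤ 2 := fun S hS => hCU S (Finset.mem_of_mem_erase hS)
  have e2 : ∀ S ∈ C.erase C0, ∀ T ∈ C.erase C0, S ≠ T → Disjoint S T := fun S hS T hT =>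
    hCd S (Finset.mem_of_mem_erase hS) T (Finset.mem_of_mem_erase hT)
  have hr := fam_rest e1 (fun S hS => hC3 S (Finset.mem_of_mem_erase hS)) e2
  have hce := Finset.card_erase_of_mem hC0
  have h1 := add_two (G := G) (k := k - t - 1) (hS1.trans hsubR) (hS2.trans hsubR) hS12
    (Nat.zero_le 1) (by omega) (le_refl 1) (by omega) (by omega)
  have h2 := PT_family _ U _ _ e1 e2 h1
  exact hno (h2.cast (by omega) (by omega))

theorem B_main (k : ℕ) : ∀ n, 1 ≤ k → k ≤ n → n + 1 ≤ 2 * k → ∀ U : Finset W,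
    DD G U < n * (n + 1) → PT G U k (n - k) := by
  induction k with
  | zero => intro n h; omega
  | succ j ih =>
    intro n _ hkn hn U
    induction U using Finset.strongInduction with
    | H U ihU =>
      intro h
      obtain ⟨aU, haU⟩ := DD_even G U
      rcases Nat.eq_zero_or_pos j with rfl | hj
      · have : n = 1 := by omega
        subst this
        exact PT_one (by omega) (by omega)
      have ihU' : ∀ v ∈ U, PT G (U.erase v) (j + 1) (n - (j + 1)) := fun v hv =>
        ihU _ (Finset.erase_ssubset hv) (lt_of_le_of_lt (DD_mono G (Finset.erase_subset v U)) h)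
      by_cases hn2 : n = 2 * j + 1
      · have e : n - (j + 1) = j := by omega
        rw [e] at ihU' ⊢
        refine B_res hj ?_ ihU' (by rw [hn2] at h; exact h)
        intro U' hU'
        have := ih (2 * j - 1) hj (by omega) (by omega) U'
          (by rw [show 2 * j - 1 + 1 = 2 * j by omega]; exact hU')
        exact this.mono (by omega)
      by_cases hdeg : ∃ v ∈ U, dg G U v < j + 1
      · obtain ⟨v, hv, hd⟩ := hdeg
        exact PT.insert hv hd (ihU' v hv)
      push Not at hdeg
      by_cases hnon : ∃ a ∈ U, dg G U a + 1 < U.card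
      · obtain ⟨a, ha, hda⟩ := hnon
        obtain ⟨c, hc, hca, hac⟩ := exists_non (G := G) (U := U) (X := {a}) (v := a)
          (by rw [Finset.card_singleton]; omega)
        have hca : c ≠ a := by simpa using hca
        have h5 := DD_pair G hca.symm
        have h6 := DD_sdiff G (sub2 ha hc)
        rw [Finset.sum_pair hca.symm] at h6
        have d1 := hdeg a ha
        have d2 := hdeg c hc
        obtain ⟨i, rfl⟩ : ∃ i, n = i + 1 := ⟨n - 1, by omega⟩
        have e1 : (i + 1) * (i + 1 + 1) = i * (i + 1) + 2 * i + 2 := by ring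
        have h1 := ih i hj (by omega) (by omega) (U \ {a, c}) (by omega)
        exact (PT.add (sub2 ha hc) (Nat.zero_le 1) (by omega) h1).cast rfl (by omega)
      · push Not at hnon
        have hcard : U.card ≤ n := by
          by_contra hcon
          have h2 : U.card • n ≤ DD G U := Finset.card_nsmul_le_sum _ _ _ fun v hv => by
            have := hnon v hv; show _ ≤ dg G U v; omega
          rw [smul_eq_mul] at h2
          have h3 : (n + 1) * n ≤ U.card * n := Nat.mul_le_mul_right _ (by omega)
          have : (n + 1) * n = n * (n + 1) := Nat.mul_comm _ _
          omega
        exact (PT_pairs (j + 1) U (by omega)).mono (by omega)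

end basic

section final
variable {V : Type*} [Fintype V] [DecidableEq V] (G : SimpleGraph V) [DecidableRel G.Adj]

theorem card_cross (S T : Finset V) :
    (Finset.univ.filter (fun p : V × V => G.Adj p.1 p.2 ∧ p.1 ∈ S ∧ p.2 ∈ T)).card
      = ∑ v ∈ S, dg G T v := by
  have : (Finset.univ.filter (fun p : V × V => G.Adj p.1 p.2 ∧ p.1 ∈ S ∧ p.2 ∈ T))
      = (S ×ˢ T).filter (fun p => G.Adj p.1 p.2) := by
    ext p; simp; tauto
  rw [this, Finset.card_filter, Finset.sum_product]
  simp only [dg_eq_sum, ad]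

theorem eIn_eq (S : Finset V) : eIn G S = DD G S / 2 := by
  unfold eIn DD; rw [card_cross]

theorem eCross_eq (S T : Finset V) : eCross G S T = ∑ v ∈ S, dg G T v := by
  unfold eCross; rw [card_cross]

theorem DD_univ : DD G (Finset.univ : Finset V) = 2 * G.edgeFinset.card := by
  rw [← G.sum_degrees_eq_twice_card_edges]
  unfold DD
  refine Finset.sum_congr rfl fun v _ => ?_
  unfold dg
  rw [← G.card_neighborFinset_eq_degree, G.neighborFinset_eq_filter]

theorem cross_total {k : ℕ} (g : V → Fin k) :
    2 * crossTotal G (fun i => Finset.univ.filter (fun v => g v = i)) +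
      ∑ i, DD G (Finset.univ.filter (fun v => g v = i)) = DD G Finset.univ := by
  obtain ⟨P, hP⟩ : ∃ P : Fin k → Finset V, P = fun i => Finset.univ.filter (fun v => g v = i) :=
    ⟨_, rfl⟩
  have hPi : ∀ i, Finset.univ.filter (fun v => g v = i) = P i := fun i => by rw [hP]
  simp only [hPi]
  have hsym : ∀ i j, eCross G (P i) (P j) = eCross G (P j) (P i) := fun i j => by
    rw [eCross_eq, eCross_eq, cross_comm]
  have htot : ∑ i, ∑ j, eCross G (P i) (P j) = DD G Finset.univ := by
    have h1 : ∀ v, ∑ j, dg G (P j) v = dg G Finset.univ v := by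
      intro v
      simp only [dg_eq_sum, hP]
      exact Finset.sum_fiberwise _ _ _
    simp only [eCross_eq]
    have h2 : ∀ i, ∑ j, ∑ v ∈ P i, dg G (P j) v = ∑ v ∈ P i, dg G Finset.univ v := by
      intro i
      rw [Finset.sum_comm]
      exact Finset.sum_congr rfl fun v _ => h1 v
    simp only [h2]
    rw [hP]
    exact Finset.sum_fiberwise _ _ _
  have hdiag : ∀ i, DD G (P i) = ∑ j, if i = j then eCross G (P i) (P j) else 0 := by
    intro i; simp [eCross_eq, DD]
  have hswap : crossTotal G P = ∑ i, ∑ j, if j < i then eCross G (P i) (P j) else 0 := by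
    unfold crossTotal
    rw [Finset.sum_comm]
    refine Finset.sum_congr rfl fun i _ => Finset.sum_congr rfl fun j _ => ?_
    rw [hsym]
  rw [← htot, two_mul]
  nth_rewrite 2 [hswap]
  unfold crossTotal
  simp only [hdiag]
  rw [← Finset.sum_add_distrib, ← Finset.sum_add_distrib]
  refine Finset.sum_congr rfl fun i _ => ?_
  rw [← Finset.sum_add_distrib, ← Finset.sum_add_distrib]
  refine Finset.sum_congr rfl fun j _ => ?_
  rcases lt_trichotomy i j with h | h | h
  · simp [h, h.ne, not_lt.2 h.le]
  · simp [h]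
  · simp [h, h.ne', not_lt.2 h.le]

theorem hfun_sq (m : ℕ) : hfun m ^ 2 + hfun m = 2 * m ∧ 0 ≤ hfun m := by
  unfold hfun
  have h0 : (0 : ℝ) ≤ m := Nat.cast_nonneg m
  have h1 := Real.sq_sqrt (show (0 : ℝ) ≤ 2 * m + 1 / 4 by linarith)
  have h2 : (1 / 2 : ℝ) ≤ Real.sqrt (2 * m + 1 / 4) := by
    apply Real.le_sqrt_of_sq_le; linarith
  constructor
  · nlinarith
  · linarith

theorem hfun_ge (m a : ℕ) (h : a * (a + 1) ≤ 2 * m) : (a : ℝ) ≤ hfun m := by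
  obtain ⟨h1, h2⟩ := hfun_sq m
  have h3 : (a : ℝ) * (a + 1) ≤ 2 * m := by exact_mod_cast h
  by_contra hc
  push Not at hc
  nlinarith

theorem of_PT {k b m : ℕ} (hk : 1 ≤ k) (hm : m = G.edgeFinset.card)
    (h : PT G (Finset.univ : Finset V) k b)
    (hb : b = 0 ∨ (k * (k + 1) ≤ 2 * m ∧ (k + b - 1) * (k + b) ≤ 2 * m)) :
    ∃ P : Fin k → Finset V, IsKPartition P ∧
      (∀ i : Fin k, (eIn G (P i) : ℝ) ≤ (m : ℝ) / k ^ 2 + (k - 1) / (2 * k ^ 2) * hfun m) ∧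
      ((k : ℝ) - 1) / k * m + ((k : ℝ) - 1) / (2 * k) * hfun m - ((k : ℝ) - 2) ^ 2 / (8 * k)
        ≤ (crossTotal G P : ℝ) := by
  obtain ⟨f, h1, h2, h3⟩ := h
  obtain ⟨hq, hn⟩ := hfun_sq m
  have hk' : (1 : ℝ) ≤ k := by exact_mod_cast hk
  have hkp : (0 : ℝ) < k := by linarith
  obtain ⟨g, hg⟩ : ∃ g : V → Fin k, ∀ v, (g v : ℕ) = f v :=
    ⟨fun v => ⟨f v, h1 v (Finset.mem_univ _)⟩, fun v => rfl⟩
  have hgf : ∀ i : Fin k, Finset.univ.filter (fun v => g v = i)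
      = Finset.univ.filter (fun v => f v = (i : ℕ)) := by
    intro i; ext v; simp [← hg, Fin.ext_iff]
  have hct := cross_total G g
  have hsum : ∑ i, DD G (Finset.univ.filter (fun v => g v = i)) ≤ 2 * b := by
    simp only [hgf]
    rw [Fin.sum_univ_eq_sum_range (fun i => DD G (Finset.univ.filter (fun v => f v = i))) k]
    exact h3
  have hle1 : ∀ i, DD G (Finset.univ.filter (fun v => g v = i)) ≤ 2 * b := fun i =>
    (Finset.single_le_sum (f := fun i => DD G (Finset.univ.filter (fun v => g v = i)))
      (fun _ _ => Nat.zero_le _) (Finset.mem_univ i)).trans hsum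
  rw [DD_univ, ← hm] at hct
  obtain ⟨c, hc⟩ : ∃ c, c = crossTotal G (fun i => Finset.univ.filter (fun v => g v = i)) :=
    ⟨_, rfl⟩
  refine ⟨fun i => Finset.univ.filter (fun v => g v = i), ⟨?_, ?_⟩, ?_, ?_⟩
  · intro i j hij
    rw [Finset.disjoint_left]
    intro v hv hv'
    simp only [Finset.mem_filter, Finset.mem_univ, true_and] at hv hv'
    exact hij (hv.symm.trans hv')
  · intro v; exact ⟨g v, by simp⟩
  · intro i
    rw [eIn_eq]
    have e : (m : ℝ) / k ^ 2 + (k - 1) / (2 * k ^ 2) * hfun m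
        = hfun m * (hfun m + k) / (2 * k ^ 2) := by
      have hmr : (m : ℝ) = (hfun m ^ 2 + hfun m) / 2 := by linarith
      generalize hfun m = x at hmr
      rw [hmr]
      field_simp
      ring
    rw [e]
    rcases hb with rfl | ⟨hb, -⟩
    · have := hle1 i
      have h0 : DD G (Finset.univ.filter (fun v => g v = i)) / 2 = 0 := by omega
      rw [h0]
      simp only [Nat.cast_zero]
      positivity
    · have h0 : DD G (Finset.univ.filter (fun v => g v = i)) / 2 ≤ 1 := by
        have := h2 i; rw [← hgf] at this; omega
      have h5 : ((DD G (Finset.univ.filter (fun v => g v = i)) / 2 : ℕ) : ℝ) ≤ 1 := by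
        exact_mod_cast h0
      refine h5.trans ?_
      have h6 := hfun_ge m k hb
      rw [le_div_iff₀ (by positivity)]
      nlinarith
  · rw [← hc] at hct ⊢
    have hcb : m ≤ c + b := by omega
    have hcb' : (m : ℝ) ≤ c + b := by exact_mod_cast hcb
    have e : ((k : ℝ) - 1) / k * m + ((k : ℝ) - 1) / (2 * k) * hfun m
        - ((k : ℝ) - 2) ^ 2 / (8 * k) = m - (2 * hfun m - k + 2) ^ 2 / (8 * k) := by
      have hmr : (m : ℝ) = (hfun m ^ 2 + hfun m) / 2 := by linarith
      generalize hfun m = x at hmr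
      rw [hmr]
      field_simp
      ring
    rw [e]
    have hbb : (b : ℝ) ≤ (2 * hfun m - k + 2) ^ 2 / (8 * k) := by
      rcases Nat.eq_zero_or_pos b with rfl | hbp
      · simp only [Nat.cast_zero]; positivity
      · rcases hb with hb | ⟨-, hb⟩
        · omega
        have h6 := hfun_ge m (k + b - 1) (by rw [show k + b - 1 + 1 = k + b by omega]; exact hb)
        rw [Nat.cast_sub (by omega)] at h6
        push_cast at h6
        rw [le_div_iff₀ (by positivity)]
        nlinarith [sq_nonneg (2 * hfun m - 3 * k + 2)]
    linarith

end final
end KP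

theorem stmt_4 {V : Type*} [Fintype V] [DecidableEq V]
    (G : SimpleGraph V) [DecidableRel G.Adj] (k : ℕ) (hk : 3 ≤ k)
    (m : ℕ) (hm : m = G.edgeFinset.card) (hsize : m < 2 * k ^ 2) :
    ∃ P : Fin k → Finset V, IsKPartition P ∧
      (∀ i : Fin k, (eIn G (P i) : ℝ) ≤ (m : ℝ) / k ^ 2 + (k - 1) / (2 * k ^ 2) * hfun m) ∧
      ((k : ℝ) - 1) / k * m + ((k : ℝ) - 1) / (2 * k) * hfun m - ((k : ℝ) - 2) ^ 2 / (8 * k)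
        ≤ (crossTotal G P : ℝ) := by
  have hD : KP.DD G (Finset.univ : Finset V) = 2 * m := by rw [KP.DD_univ, hm]
  by_cases h0 : 2 * m < k * (k + 1)
  · refine KP.of_PT G (b := 0) (by omega) hm ?_ (Or.inl rfl)
    exact (KP.B_main k k (by omega) le_rfl (by omega) _ (by omega)).mono (by omega)
  · have hex : ∃ n, 2 * m < n * (n + 1) := ⟨2 * k, by
      have : 2 * k * (2 * k + 1) = 4 * k ^ 2 + 2 * k := by ring
      omega⟩
    obtain ⟨n, hn, hmin⟩ : ∃ n, 2 * m < n * (n + 1) ∧ ∀ n' < n, n' * (n' + 1) ≤ 2 * m := by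
      classical
      exact ⟨Nat.find hex, Nat.find_spec hex, fun n' hn' => not_lt.1 (Nat.find_min hex hn')⟩
    have hkn : k < n := by
      by_contra hc
      have : n * (n + 1) ≤ k * (k + 1) := Nat.mul_le_mul (by omega) (by omega)
      omega
    have hn2 : n ≤ 2 * k := by
      by_contra hc
      have h1 := hmin (2 * k) (by omega)
      have : 2 * k * (2 * k + 1) = 4 * k ^ 2 + 2 * k := by ring
      omega
    have hprev := hmin (n - 1) (by omega)
    rw [show n - 1 + 1 = n by omega] at hprev
    refine KP.of_PT G (b := n - k) (by omega) hm ?_ (Or.inr ⟨by omega, ?_⟩)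
    · rcases Nat.lt_or_ge n (2 * k) with h | h
      · exact KP.B_main k n (by omega) (by omega) (by omega) _ (by omega)
      · exact (KP.A_main k _ (by omega)).mono (by omega)
    · rw [show k + (n - k) = n by omega]; exact hprev
end
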